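/- Let n ≥ 4. The (n-2)-minors of X form a Gröbner basis of I_{n-2} with respect to ≺: the initial ideal in_≺(I_{n-2}) equals the ideal of S generated by the leading monomials in_≺(Δ) of all (n-2)×(n-2) minors Δ of X. -/

import Mathlib

open MvPolynomial

/-- The set `D` of diagonal variables `x_{ii}` (0-indexed). -/
def Dset (n : ℕ) : Set (Sym2 (Fin n)) := {v | ∃ i : Fin n, v = s(i, i)}

/-- The set `U` of variables `x_{13}, x_{24}, …, x_{n-2,n}, x_{12}, x_{n-1,n}` (0-indexed). -/
def Uset (n : ℕ) : Set (Sym2 (Fin n)) :=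
  {v | ∃ i j : Fin n, v = s(i, j) ∧
    ((j : ℕ) = (i : ℕ) + 2 ∨ ((i : ℕ) = 0 ∧ (j : ℕ) = 1) ∨
      ((i : ℕ) = n - 2 ∧ (j : ℕ) = n - 1))}

/-- `rank` encodes the linear order on the variables described in the paper:
`x_{11} ≻ … ≻ x_{nn} ≻ x_{13} ≻ … ≻ x_{n-2,n} ≻ x_{12} ≻ x_{n-1,n} ≻ (rest)`,
where a smaller rank means a larger variable. -/
def IsGoodRank (n : ℕ) (rank : Sym2 (Fin n) → ℕ) : Prop :=
  Function.Injective rank ∧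
  (∀ i : Fin n, rank s(i, i) = (i : ℕ)) ∧
  (∀ i j : Fin n, (j : ℕ) = (i : ℕ) + 2 → rank s(i, j) = n + (i : ℕ)) ∧
  (∀ i j : Fin n, (i : ℕ) = 0 → (j : ℕ) = 1 → rank s(i, j) = 2 * n - 2) ∧
  (∀ i j : Fin n, (i : ℕ) = n - 2 → (j : ℕ) = n - 1 → rank s(i, j) = 2 * n - 1) ∧
  (∀ v : Sym2 (Fin n), v ∉ Dset n ∪ Uset n → 2 * n ≤ rank v)

/-- The degree reverse lexicographic order on exponent vectors induced by `rank`: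
`a ≺ b` iff `deg a < deg b`, or the degrees agree and at the `rank`-largest (i.e. smallest)
variable where `a` and `b` differ, `a` has the larger exponent. -/
def DegRevLexLT {n : ℕ} (rank : Sym2 (Fin n) → ℕ) (a b : Sym2 (Fin n) →₀ ℕ) : Prop :=
  (a.sum fun _ e => e) < (b.sum fun _ e => e) ∨
    ((a.sum fun _ e => e) = (b.sum fun _ e => e) ∧
      ∃ v : Sym2 (Fin n), b v < a v ∧ ∀ w : Sym2 (Fin n), rank v < rank w → a w = b w)

/-- `μ` is the leading monomial (exponent vector) of `f` w.r.t. the degrevlex order `≺`. -/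
def IsLeadingMonomial {K : Type*} [Field K] {n : ℕ} (rank : Sym2 (Fin n) → ℕ)
    (f : MvPolynomial (Sym2 (Fin n)) K) (μ : Sym2 (Fin n) →₀ ℕ) : Prop :=
  μ ∈ f.support ∧ ∀ ν ∈ f.support, ν ≠ μ → DegRevLexLT rank ν μ

/-- The minor `[a_1,…,a_s | b_1,…,b_s]` of the generic symmetric matrix `X = (x_{ij})`. -/
noncomputable def symMinor (K : Type*) [Field K] {n s : ℕ} (a b : Fin s → Fin n) :
    MvPolynomial (Sym2 (Fin n)) K :=
  Matrix.det (Matrix.of fun k l => (MvPolynomial.X s(a k, b l) : MvPolynomial (Sym2 (Fin n)) K))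

/-- The ideal `I_t` of `S` generated by all `t × t` minors of the generic symmetric
matrix `X`. -/
noncomputable def minorsIdeal (K : Type*) [Field K] (n t : ℕ) :
    Ideal (MvPolynomial (Sym2 (Fin n)) K) :=
  Ideal.span {p | ∃ a b : Fin t → Fin n, StrictMono a ∧ StrictMono b ∧ p = symMinor K a b}

/-- The initial ideal `in_≺(I)`: the ideal generated by the leading monomials of the
nonzero elements of `I`. -/
noncomputable def initialIdeal {K : Type*} [Field K] {n : ℕ} (rank : Sym2 (Fin n) → ℕ)
    (I : Ideal (MvPolynomial (Sym2 (Fin n)) K)) : Ideal (MvPolynomial (Sym2 (Fin n)) K) :=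
  Ideal.span {p | ∃ f ∈ I, f ≠ 0 ∧ ∃ μ : Sym2 (Fin n) →₀ ℕ,
    IsLeadingMonomial rank f μ ∧ p = MvPolynomial.monomial μ 1}


/-! ### The term order -/

section Order

variable {n : ℕ} {rank : Sym2 (Fin n) → ℕ}

/-- total degree of an exponent vector -/
def tdeg {n : ℕ} (a : Sym2 (Fin n) →₀ ℕ) : ℕ := a.sum fun _ e => e

lemma tdeg_add (a b : Sym2 (Fin n) →₀ ℕ) : tdeg (a + b) = tdeg a + tdeg b :=
  Finsupp.sum_add_index' (fun _ => rfl) (fun _ _ _ => rfl)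

lemma le_tdeg (a : Sym2 (Fin n) →₀ ℕ) (v : Sym2 (Fin n)) : a v ≤ tdeg a := by
  classical
  by_cases h : v ∈ a.support
  · exact Finset.single_le_sum (f := fun v => a v) (fun _ _ => Nat.zero_le _) h
  · simp only [Finsupp.mem_support_iff, not_not] at h
    simp [h]

lemma drl_irrefl (a : Sym2 (Fin n) →₀ ℕ) : ¬ DegRevLexLT rank a a := by
  rintro (h | ⟨_, v, hv, _⟩)
  · exact lt_irrefl _ h
  · exact lt_irrefl _ hv

lemma drl_trans (hr : Function.Injective rank) {a b c : Sym2 (Fin n) →₀ ℕ}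
    (h1 : DegRevLexLT rank a b) (h2 : DegRevLexLT rank b c) : DegRevLexLT rank a c := by
  rcases h1 with h1 | ⟨h1, v, hv, hv'⟩ <;> rcases h2 with h2 | ⟨h2, w, hw, hw'⟩
  · exact Or.inl (h1.trans h2)
  · exact Or.inl (h2 ▸ h1)
  · exact Or.inl (h1 ▸ h2)
  · refine Or.inr ⟨h1.trans h2, ?_⟩
    rcases lt_trichotomy (rank v) (rank w) with h | h | h
    · refine ⟨w, by rw [hv' w h]; exact hw, fun x hx => ?_⟩
      rw [hv' x (h.trans hx), hw' x hx]
    · have := hr h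
      subst this
      refine ⟨v, hw.trans hv, fun x hx => ?_⟩
      rw [hv' x hx, hw' x hx]
    · refine ⟨v, by rw [← hw' v h]; exact hv, fun x hx => ?_⟩
      rw [hv' x hx, hw' x (h.trans hx)]

lemma drl_add {a b : Sym2 (Fin n) →₀ ℕ} (c : Sym2 (Fin n) →₀ ℕ)
    (h : DegRevLexLT rank a b) : DegRevLexLT rank (c + a) (c + b) := by
  rcases h with h | ⟨h, v, hv, hv'⟩
  · refine Or.inl ?_
    have := tdeg_add c a
    have := tdeg_add c b
    simp only [tdeg] at *
    omega
  · refine Or.inr ⟨?_, v, ?_, fun w hw => ?_⟩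
    · have := tdeg_add c a
      have := tdeg_add c b
      simp only [tdeg] at *
      omega
    · simpa using hv
    · simp [hv' w hw]

lemma tdeg_le_of_lt {a b : Sym2 (Fin n) →₀ ℕ} (h : DegRevLexLT rank a b) : tdeg a ≤ tdeg b := by
  rcases h with h | ⟨h, _⟩
  · exact h.le
  · exact h.le

lemma finite_tdeg_le (d : ℕ) : {a : Sym2 (Fin n) →₀ ℕ | tdeg a ≤ d}.Finite := by
  classical
  refine (Set.finite_Iic (Finsupp.equivFunOnFinite.symm fun _ : Sym2 (Fin n) => d)).subset ?_
  intro a ha v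
  exact (le_tdeg a v).trans ha

lemma lt_wf (hr : Function.Injective rank) : WellFounded (DegRevLexLT rank) := by
  have key : ∀ d, WellFounded (fun a b : {a : Sym2 (Fin n) →₀ ℕ // tdeg a ≤ d} =>
      DegRevLexLT rank a.1 b.1) := by
    intro d
    have : Finite {a : Sym2 (Fin n) →₀ ℕ // tdeg a ≤ d} := (finite_tdeg_le d).to_subtype
    have : IsTrans {a : Sym2 (Fin n) →₀ ℕ // tdeg a ≤ d}
      (fun a b => DegRevLexLT rank a.1 b.1) := ⟨fun _ _ _ h1 h2 => drl_trans hr h1 h2⟩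
    have : Std.Irrefl (fun a b : {a : Sym2 (Fin n) →₀ ℕ // tdeg a ≤ d} =>
      DegRevLexLT rank a.1 b.1) := ⟨fun a => drl_irrefl a.1⟩
    exact Finite.wellFounded_of_trans_of_irrefl _
  refine ⟨fun a => ?_⟩
  have : ∀ (b : {b : Sym2 (Fin n) →₀ ℕ // tdeg b ≤ tdeg a}), Acc (DegRevLexLT rank) b.1 := by
    intro b
    induction b using (key (tdeg a)).induction with
    | _ b ih =>
      refine ⟨_, fun c hc => ?_⟩
      exact ih ⟨c, (tdeg_le_of_lt hc).trans b.2⟩ hc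
  exact this ⟨a, le_rfl⟩

/-- criterion for being smaller -/
lemma lt_of_threshold {μ ν : Sym2 (Fin n) →₀ ℕ} (N : ℕ)
    (hdeg : tdeg ν = tdeg μ) (hle : ∀ v, N ≤ rank v → μ v ≤ ν v)
    (hex : ∃ v, N ≤ rank v ∧ μ v < ν v) : DegRevLexLT rank ν μ := by
  classical
  refine Or.inr ⟨hdeg, ?_⟩
  obtain ⟨v0, hv0, hv0'⟩ := hex
  obtain ⟨v, hv, hmax⟩ := Finset.exists_max_image
    (Finset.univ.filter fun v => N ≤ rank v ∧ μ v < ν v) rank ⟨v0, by simp [hv0, hv0']⟩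
  simp only [Finset.mem_filter, Finset.mem_univ, true_and] at hv hmax
  refine ⟨v, hv.2, fun w hw => ?_⟩
  by_contra hne
  have h1 : N ≤ rank w := hv.1.trans hw.le
  have := hmax w ⟨h1, lt_of_le_of_ne (hle w h1) (Ne.symm hne)⟩
  omega

end Order

/-! ### Division -/

section Division

variable {K : Type*} [Field K] {n : ℕ} {rank : Sym2 (Fin n) → ℕ}

lemma exists_reduce (hr : Function.Injective rank)
    (I : Ideal (MvPolynomial (Sym2 (Fin n)) K)) (G : Set (Sym2 (Fin n) →₀ ℕ))
    (hG : ∀ g ∈ G, ∃ f ∈ I, IsLeadingMonomial rank f g) (ν : Sym2 (Fin n) →₀ ℕ) :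
    ∃ h : MvPolynomial (Sym2 (Fin n)) K, MvPolynomial.monomial ν 1 - h ∈ I ∧
      ∀ κ ∈ h.support, (∀ g ∈ G, ¬ g ≤ κ) ∧ (κ = ν ∨ DegRevLexLT rank κ ν) := by
  classical
  induction ν using (lt_wf hr).induction with
  | _ ν ih =>
    by_cases hstd : ∀ g ∈ G, ¬ g ≤ ν
    · refine ⟨MvPolynomial.monomial ν 1, by simp, fun κ hκ => ?_⟩
      have : κ = ν := by
        have := MvPolynomial.support_monomial_subset hκ
        simpa using this
      subst this
      exact ⟨hstd, Or.inl rfl⟩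
    · push Not at hstd
      obtain ⟨g, hg, hgν⟩ := hstd
      obtain ⟨f, hf, hlead⟩ := hG g hg
      obtain ⟨κ, rfl⟩ := exists_add_of_le hgν
      rw [add_comm g κ] at *
      set c := f.coeff g with hc
      have hc0 : c ≠ 0 := by simpa [hc] using hlead.1
      have hlow : ∀ α ∈ f.support.erase g, DegRevLexLT rank (κ + α) (κ + g) := by
        intro α hα
        rw [Finset.mem_erase] at hα
        exact drl_add κ (hlead.2 α hα.2 hα.1)
      choose! H hH using ih
      refine ⟨- ∑ α ∈ f.support.erase g, MvPolynomial.C (f.coeff α / c) * H (κ + α), ?_, ?_⟩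
      · have e1 : MvPolynomial.monomial κ c⁻¹ * f = MvPolynomial.monomial (κ + g) 1 +
            ∑ α ∈ f.support.erase g, MvPolynomial.monomial (κ + α) (f.coeff α / c) := by
          conv_lhs => rw [f.as_sum, Finset.mul_sum]
          rw [← Finset.add_sum_erase _ _ hlead.1]
          congr 1
          · rw [MvPolynomial.monomial_mul, ← hc, inv_mul_cancel₀ hc0]
          · refine Finset.sum_congr rfl fun α _ => ?_
            rw [MvPolynomial.monomial_mul, div_eq_inv_mul]
        have e2 : MvPolynomial.monomial (κ + g) 1 -
            -∑ α ∈ f.support.erase g, MvPolynomial.C (f.coeff α / c) * H (κ + α) =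
            MvPolynomial.monomial κ c⁻¹ * f - ∑ α ∈ f.support.erase g,
              MvPolynomial.C (f.coeff α / c) * (MvPolynomial.monomial (κ + α) 1 - H (κ + α)) := by
          rw [e1]
          simp only [mul_sub, Finset.sum_sub_distrib, MvPolynomial.C_mul_monomial, mul_one]
          ring
        rw [e2]
        refine I.sub_mem (I.mul_mem_left _ hf) (I.sum_mem fun α hα => I.mul_mem_left _ ?_)
        exact (hH _ (hlow α hα)).1
      · intro β hβ
        rw [MvPolynomial.support_neg] at hβ
        have := MvPolynomial.support_sum hβ
        rw [Finset.mem_biUnion] at this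
        obtain ⟨α, hα, hβ'⟩ := this
        have hβ2 : β ∈ (H (κ + α)).support := by
          rw [MvPolynomial.mem_support_iff, MvPolynomial.coeff_C_mul] at hβ'
          rw [MvPolynomial.mem_support_iff]
          exact right_ne_zero_of_mul hβ'
        obtain ⟨h1, h2⟩ := (hH _ (hlow α hα)).2 β hβ2
        refine ⟨h1, Or.inr ?_⟩
        rcases h2 with rfl | h2
        · exact hlow α hα
        · exact drl_trans hr h2 (hlow α hα)

lemma exists_std (hr : Function.Injective rank)
    (I : Ideal (MvPolynomial (Sym2 (Fin n)) K)) (G : Set (Sym2 (Fin n) →₀ ℕ))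
    (hG : ∀ g ∈ G, ∃ f ∈ I, IsLeadingMonomial rank f g)
    (f : MvPolynomial (Sym2 (Fin n)) K) (hf : f ∈ I) (μ : Sym2 (Fin n) →₀ ℕ)
    (hμ : IsLeadingMonomial rank f μ) (hstd : ∀ g ∈ G, ¬ g ≤ μ) :
    ∃ h ∈ I, h ≠ 0 ∧ ∀ κ ∈ h.support, ∀ g ∈ G, ¬ g ≤ κ := by
  classical
  choose H hH using exists_reduce hr I G hG
  set h := MvPolynomial.monomial μ (f.coeff μ) +
    ∑ ν ∈ f.support.erase μ, MvPolynomial.C (f.coeff ν) * H ν with hh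
  refine ⟨h, ?_, ?_, ?_⟩
  · have : h = f - ∑ ν ∈ f.support.erase μ,
        MvPolynomial.C (f.coeff ν) * (MvPolynomial.monomial ν 1 - H ν) := by
      have e : f = MvPolynomial.monomial μ (f.coeff μ) +
          ∑ ν ∈ f.support.erase μ, MvPolynomial.monomial ν (f.coeff ν) := by
        rw [Finset.add_sum_erase _ (fun ν => MvPolynomial.monomial ν (f.coeff ν)) hμ.1]
        exact f.as_sum
      simp only [mul_sub, Finset.sum_sub_distrib, MvPolynomial.C_mul_monomial, mul_one]
      rw [hh]
      linear_combination -e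
    rw [this]
    exact I.sub_mem hf (I.sum_mem fun ν _ => I.mul_mem_left _ (hH ν).1)
  · have : h.coeff μ = f.coeff μ := by
      rw [hh, MvPolynomial.coeff_add, MvPolynomial.coeff_monomial, if_pos rfl,
        MvPolynomial.coeff_sum, Finset.sum_eq_zero, add_zero]
      intro ν hν
      rw [Finset.mem_erase] at hν
      rw [MvPolynomial.coeff_C_mul]
      by_cases h0 : μ ∈ (H ν).support
      · exfalso
        rcases ((hH ν).2 μ h0).2 with h1 | h1
        · exact hν.1 h1.symm
        · exact drl_irrefl _ (drl_trans hr h1 (hμ.2 ν hν.2 hν.1))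
      · rw [MvPolynomial.mem_support_iff, not_not] at h0
        rw [h0, mul_zero]
    intro h0
    have h1 := hμ.1
    rw [MvPolynomial.mem_support_iff, ← this, h0] at h1
    simp at h1
  · intro κ hκ
    have := MvPolynomial.support_add hκ
    rw [Finset.mem_union] at this
    rcases this with h1 | h1
    · have : κ = μ := by
        have := MvPolynomial.support_monomial_subset h1
        simpa using this
      rw [this]
      exact hstd
    · have := MvPolynomial.support_sum h1
      rw [Finset.mem_biUnion] at this
      obtain ⟨ν, _, hβ'⟩ := this
      have hβ2 : κ ∈ (H ν).support := by
        rw [MvPolynomial.mem_support_iff, MvPolynomial.coeff_C_mul] at hβ'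
        rw [MvPolynomial.mem_support_iff]
        exact right_ne_zero_of_mul hβ'
      exact ((hH ν).2 κ hβ2).1

end Division

/-! ### Cyclic labellings -/

section Labelling

variable {n : ℕ}

/-- adjacency in the standard `n`-cycle, on natural number labels -/
def cadj (n a b : ℕ) : Prop :=
  a + 1 = b ∨ b + 1 = a ∨ (a = 0 ∧ b + 1 = n) ∨ (a + 1 = n ∧ b = 0)

/-- labellings identifying `U` with the standard `n`-cycle -/
def Good (σ : Equiv.Perm (Fin n)) : Prop :=
  ∀ c c' : Fin n, c ≠ c' → (s(σ c, σ c') ∈ Uset n ↔ cadj n c c')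

lemma mem_Uset_iff (a b : Fin n) : s(a, b) ∈ Uset n ↔
    ((b : ℕ) = a + 2 ∨ ((a : ℕ) = 0 ∧ (b : ℕ) = 1) ∨ ((a : ℕ) = n - 2 ∧ (b : ℕ) = n - 1)) ∨
    ((a : ℕ) = b + 2 ∨ ((b : ℕ) = 0 ∧ (a : ℕ) = 1) ∨ ((b : ℕ) = n - 2 ∧ (a : ℕ) = n - 1)) := by
  constructor
  · rintro ⟨i, j, hij, h⟩
    rw [Sym2.eq_iff] at hij
    rcases hij with ⟨rfl, rfl⟩ | ⟨rfl, rfl⟩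
    · exact Or.inl h
    · exact Or.inr h
  · rintro (h | h)
    · exact ⟨a, b, rfl, h⟩
    · exact ⟨b, a, Sym2.eq_swap, h⟩

lemma exists_good (hn : 4 ≤ n) : ∃ σ : Equiv.Perm (Fin n), Good σ := by
  let f : Fin n → Fin n := fun c => ⟨if 2 * (c : ℕ) < n then 2 * c else 2 * n - 1 - 2 * c, by
    have := c.2
    split_ifs <;> omega⟩
  have hf : Function.Injective f := by
    intro a b h
    have h := congrArg Fin.val h
    have := a.2
    have := b.2
    ext
    simp only [f] at h
    split_ifs at h <;> omega
  refine ⟨Equiv.ofBijective f (Finite.injective_iff_bijective.1 hf), ?_⟩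
  intro c c' hne
  have hne' : (c : ℕ) ≠ c' := fun h => hne (Fin.ext h)
  have := c.2
  have := c'.2
  rw [mem_Uset_iff]
  simp only [Equiv.ofBijective_apply, f, cadj]
  split_ifs <;> omega

lemma add_mod_cases (c k : Fin n) : (((c : ℕ) + k) % n = c + k ∧ (c : ℕ) + k < n) ∨
    (((c : ℕ) + k) % n = c + k - n ∧ n ≤ (c : ℕ) + k) := by
  have := c.2
  have := k.2
  by_cases h : (c : ℕ) + k < n
  · exact Or.inl ⟨Nat.mod_eq_of_lt h, h⟩
  · refine Or.inr ⟨?_, by omega⟩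
    rw [Nat.mod_eq_sub_mod (by omega), Nat.mod_eq_of_lt (by omega)]

lemma exists_rot [NeZero n] (hn : 4 ≤ n) {σ : Equiv.Perm (Fin n)} (hσ : Good σ) (c0 : ℕ)
    (hc0 : c0 + 1 < n) : ∃ σ' : Equiv.Perm (Fin n), Good σ' ∧
      σ' ⟨n - 1, by omega⟩ = σ ⟨c0, by omega⟩ ∧ σ' ⟨0, by omega⟩ = σ ⟨c0 + 1, hc0⟩ := by
  refine ⟨(Equiv.addRight (⟨c0 + 1, hc0⟩ : Fin n)).trans σ, ?_, ?_, ?_⟩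
  · intro c c' hne
    have h1 : c + (⟨c0 + 1, hc0⟩ : Fin n) ≠ c' + ⟨c0 + 1, hc0⟩ := fun h => hne (add_right_cancel h)
    have := hσ _ _ h1
    simp only [Equiv.trans_apply, Equiv.coe_addRight]
    rw [this]
    have := c.2
    have := c'.2
    simp only [cadj, Fin.val_add]
    have hne' : (c : ℕ) ≠ c' := fun h => hne (Fin.ext h)
    rcases add_mod_cases c ⟨c0 + 1, hc0⟩ with ⟨h1, h2⟩ | ⟨h1, h2⟩ <;>
    rcases add_mod_cases c' ⟨c0 + 1, hc0⟩ with ⟨h3, h4⟩ | ⟨h3, h4⟩ <;>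
    simp only at h1 h2 h3 h4 <;> rw [h1, h3] <;> omega
  · simp only [Equiv.trans_apply, Equiv.coe_addRight]
    congr 1
    ext
    simp only [Fin.val_add]
    rw [Nat.mod_eq_sub_mod (by omega), Nat.mod_eq_of_lt (by omega)]
    omega
  · simp only [Equiv.trans_apply, Equiv.coe_addRight]
    congr 1
    ext
    simp only [Fin.val_add]
    rw [Nat.mod_eq_of_lt (by omega)]
    omega

/-- the increasing enumeration of `Fin n` omitting `p < q` -/
def skip (n p q : ℕ) (k : Fin (n - 2)) : Fin n :=
  ⟨if (k : ℕ) < p then k else if (k : ℕ) + 1 < q then k + 1 else k + 2, by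
    have := k.2
    split_ifs <;> omega⟩

lemma skip_strictMono {p q : ℕ} (h : p < q) : StrictMono (skip n p q) := by
  intro a b hab
  rw [Fin.lt_def] at *
  simp only [skip]
  split_ifs <;> omega

/-- the exponent vector of the special monomials -/
noncomputable def xmon (σ : Equiv.Perm (Fin n)) (p1 p2 p3 p4 : ℕ) : Sym2 (Fin n) →₀ ℕ :=
  ∑ k : Fin (n - 2), Finsupp.single s(σ (skip n p2 p3 k), σ (skip n p1 p4 k)) 1

/-- the set of special monomials -/
def xset (n : ℕ) : Set (Sym2 (Fin n) →₀ ℕ) :=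
  {g | ∃ (σ : Equiv.Perm (Fin n)) (p1 p2 p3 p4 : ℕ), Good σ ∧ p1 ≤ p2 ∧ p2 < p3 ∧ p3 ≤ p4 ∧
    p4 < n ∧ g = xmon σ p1 p2 p3 p4}

lemma sum_single_le {κ : Type*} [Fintype κ] {τ : Type*} (x : κ → τ) (hx : Function.Injective x)
    (m : τ →₀ ℕ) (h : ∀ k, m (x k) ≠ 0) : ∑ k, Finsupp.single (x k) 1 ≤ m := by
  classical
  intro t
  rw [Finsupp.finsetSum_apply]
  by_cases ht : ∃ k, x k = t
  · obtain ⟨k, rfl⟩ := ht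
    rw [Finset.sum_eq_single k]
    · simp only [Finsupp.single_eq_same]
      exact Nat.one_le_iff_ne_zero.2 (h k)
    · intro b _ hb
      rw [Finsupp.single_eq_of_ne]
      exact fun e => hb (hx e.symm)
    · simp
  · rw [Finset.sum_eq_zero]
    · exact Nat.zero_le _
    · intro k _
      rw [Finsupp.single_eq_of_ne]
      exact fun e => ht ⟨k, e.symm⟩

lemma cell_injective (σ : Equiv.Perm (Fin n)) {p1 p2 p3 p4 : ℕ} (h23 : p2 < p3) (h14 : p1 < p4) :
    Function.Injective fun k : Fin (n - 2) => s(σ (skip n p2 p3 k), σ (skip n p1 p4 k)) := by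
  have hr := skip_strictMono (n := n) h23
  have hc := skip_strictMono (n := n) h14
  intro k k' h
  simp only [Sym2.eq_iff, EmbeddingLike.apply_eq_iff_eq] at h
  rcases h with ⟨h, _⟩ | ⟨h, h'⟩
  · exact hr.injective h
  · rcases lt_trichotomy k k' with hk | hk | hk
    · have h1 := hr hk
      have h2 := hc hk
      rw [h, h'] at *
      exact absurd h1 (not_lt.2 h2.le)
    · exact hk
    · have h1 := hr hk
      have h2 := hc hk
      rw [h, h'] at *
      exact absurd h1 (not_lt.2 h2.le)

lemma std_ineq {m : Sym2 (Fin n) →₀ ℕ} (hm : ∀ g ∈ xset n, ¬ g ≤ m)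
    {σ : Equiv.Perm (Fin n)} (hσ : Good σ) {p1 p2 p3 p4 : ℕ} (h12 : p1 ≤ p2) (h23 : p2 < p3)
    (h34 : p3 ≤ p4) (h4 : p4 < n)
    (hd : ∀ v, (hv : v < n) → (v < p1 ∨ (p2 < v ∧ v < p3) ∨ p4 < v) →
      m s(σ ⟨v, hv⟩, σ ⟨v, hv⟩) ≠ 0)
    (he : ∀ c, (hc : c + 1 < n) → ((p1 ≤ c ∧ c < p2) ∨ (p3 ≤ c ∧ c < p4)) →
      m s(σ ⟨c, by omega⟩, σ ⟨c + 1, hc⟩) ≠ 0) : False := by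
  refine hm _ ⟨σ, p1, p2, p3, p4, hσ, h12, h23, h34, h4, rfl⟩ ?_
  refine sum_single_le _ (cell_injective σ h23 (by omega)) m ?_
  intro k
  have hk := k.2
  by_cases c1 : (k : ℕ) < p1
  · have e1 : skip n p2 p3 k = ⟨k, by omega⟩ := by
      ext; simp only [skip]; split_ifs <;> omega
    have e2 : skip n p1 p4 k = ⟨k, by omega⟩ := by
      ext; simp only [skip]; split_ifs <;> omega
    rw [e1, e2]
    exact hd _ _ (by omega)
  by_cases c2 : (k : ℕ) < p2
  · have e1 : skip n p2 p3 k = ⟨k, by omega⟩ := by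
      ext; simp only [skip]; split_ifs <;> omega
    have e2 : skip n p1 p4 k = ⟨k + 1, by omega⟩ := by
      ext; simp only [skip]; split_ifs <;> omega
    rw [e1, e2]
    exact he _ _ (by omega)
  by_cases c3 : (k : ℕ) + 1 < p3
  · have e1 : skip n p2 p3 k = ⟨k + 1, by omega⟩ := by
      ext; simp only [skip]; split_ifs <;> omega
    have e2 : skip n p1 p4 k = ⟨k + 1, by omega⟩ := by
      ext; simp only [skip]; split_ifs <;> omega
    rw [e1, e2]
    exact hd _ _ (by omega)
  by_cases c4 : (k : ℕ) + 1 < p4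
  · have e1 : skip n p2 p3 k = ⟨k + 1 + 1, by omega⟩ := by
      ext; simp only [skip]; split_ifs <;> omega
    have e2 : skip n p1 p4 k = ⟨k + 1, by omega⟩ := by
      ext; simp only [skip]; split_ifs <;> omega
    rw [e1, e2, Sym2.eq_swap]
    exact he _ _ (by omega)
  · have e1 : skip n p2 p3 k = ⟨k + 2, by omega⟩ := by
      ext; simp only [skip]; split_ifs <;> omega
    have e2 : skip n p1 p4 k = ⟨k + 2, by omega⟩ := by
      ext; simp only [skip]; split_ifs <;> omega
    rw [e1, e2]
    exact hd _ _ (by omega)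

lemma min_exists (P : ℕ → Prop) : (∀ x, ¬ P x) ∨ ∃ x, P x ∧ ∀ y, y < x → ¬ P y := by
  classical
  by_cases h : ∃ x, P x
  · exact Or.inr ⟨Nat.find h, Nat.find_spec h, fun y hy => Nat.find_min h hy⟩
  · exact Or.inl fun x hx => h ⟨x, hx⟩

lemma comb_core (hn : 4 ≤ n) (d e : ℕ → Prop)
    (H : ∀ p1 p2 p3 p4, p1 ≤ p2 → p2 < p3 → p3 ≤ p4 → p4 < n →
      (∀ v, v < n → (v < p1 ∨ (p2 < v ∧ v < p3) ∨ p4 < v) → d v) →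
      (∀ c, c + 1 < n → ((p1 ≤ c ∧ c < p2) ∨ (p3 ≤ c ∧ c < p4)) → e c) → False) :
    ∃ v1 i v2 j v3, v1 ≤ i ∧ i < v2 ∧ v2 ≤ j ∧ j < v3 ∧ v3 < n ∧ ¬ d v1 ∧ ¬ d v2 ∧ ¬ d v3 ∧
      ¬ e i ∧ ¬ e j := by
  rcases min_exists (fun v => v < n ∧ ¬ d v) with h | ⟨v1, ⟨hv1, dv1⟩, m1⟩
  · refine (H 0 0 1 1 (by omega) (by omega) (by omega) (by omega) ?_ ?_).elim
    · intro v hv _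
      by_contra hd
      exact h v ⟨hv, hd⟩
    · intro c _ hc
      omega
  have m1' : ∀ y, y < v1 → d y := by
    intro y hy
    by_contra hd
    exact m1 y hy ⟨by omega, hd⟩
  rcases min_exists (fun c => v1 ≤ c ∧ c + 1 < n ∧ ¬ e c) with h | ⟨i, ⟨hi, hi', ei⟩, m2⟩
  · have h' : ∀ c, v1 ≤ c → c + 1 < n → e c := by
      intro c h1 h2
      by_contra he
      exact h c ⟨h1, h2, he⟩
    by_cases hv : v1 = n - 1
    · refine (H 0 0 (n-1) (n-1) (by omega) (by omega) (by omega) (by omega) ?_ ?_).elim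
      · intro v hv _
        exact m1' _ (by omega)
      · intro c _ hc
        omega
    · refine (H v1 (n-2) (n-1) (n-1) (by omega) (by omega) (by omega) (by omega) ?_ ?_).elim
      · intro v hv _
        exact m1' _ (by omega)
      · intro c _ hc
        exact h' _ (by omega) (by omega)
  have m2' : ∀ y, v1 ≤ y → y < i → e y := by
    intro y hy hy'
    by_contra hd
    exact m2 y hy' ⟨by omega, by omega, hd⟩
  rcases min_exists (fun v => i < v ∧ v < n ∧ ¬ d v) with h | ⟨v2, ⟨hv2, hv2', dv2⟩, m3⟩
  · refine (H v1 i (n-1) (n-1) (by omega) (by omega) (by omega) (by omega) ?_ ?_).elim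
    · intro v hv h1
      by_cases hvv : v < v1
      · exact m1' _ hvv
      · by_contra hd
        exact h v ⟨by omega, hv, hd⟩
    · intro c _ hc
      exact m2' _ (by omega) (by omega)
  have m3' : ∀ y, i < y → y < v2 → d y := by
    intro y hy hy'
    by_contra hd
    exact m3 y hy' ⟨by omega, by omega, hd⟩
  rcases min_exists (fun c => v2 ≤ c ∧ c + 1 < n ∧ ¬ e c) with h | ⟨j, ⟨hj, hj', ej⟩, m4⟩
  · refine (H v1 i v2 (n-1) (by omega) (by omega) (by omega) (by omega) ?_ ?_).elim
    · intro v hv h1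
      by_cases hvv : v < v1
      · exact m1' _ hvv
      · exact m3' _ (by omega) (by omega)
    · intro c hc hc'
      by_cases hvv : c < i
      · exact m2' _ (by omega) (by omega)
      · by_contra hd
        exact h c ⟨by omega, hc, hd⟩
  have m4' : ∀ y, v2 ≤ y → y < j → e y := by
    intro y hy hy'
    by_contra hd
    exact m4 y hy' ⟨by omega, by omega, hd⟩
  rcases min_exists (fun v => j < v ∧ v < n ∧ ¬ d v) with h | ⟨v3, ⟨hv3, hv3', dv3⟩, m5⟩
  · refine (H v1 i v2 j (by omega) (by omega) (by omega) (by omega) ?_ ?_).elim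
    · intro v hv h1
      by_cases hvv : v < v1
      · exact m1' _ hvv
      · by_cases hvv' : v < v2
        · exact m3' _ (by omega) (by omega)
        · by_contra hd
          exact h v ⟨by omega, hv, hd⟩
    · intro c hc hc'
      by_cases hvv : c < i
      · exact m2' _ (by omega) (by omega)
      · exact m4' _ (by omega) (by omega)
  exact ⟨v1, i, v2, j, v3, hi, hv2, hj, hv3, hv3', dv1, dv2, dv3, ei, ej⟩

/-- structure of the standard monomials -/
lemma std_structure (hn : 4 ≤ n) {m : Sym2 (Fin n) →₀ ℕ} (hm : ∀ g ∈ xset n, ¬ g ≤ m) :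
    ∃ (σ : Equiv.Perm (Fin n)) (v1 i v2 j v3 : ℕ) (_ : v1 ≤ i) (_ : i < v2) (_ : v2 ≤ j)
      (_ : j < v3) (_ : v3 < n), Good σ ∧
      m s(σ ⟨v1, by omega⟩, σ ⟨v1, by omega⟩) = 0 ∧
      m s(σ ⟨v2, by omega⟩, σ ⟨v2, by omega⟩) = 0 ∧
      m s(σ ⟨v3, by omega⟩, σ ⟨v3, by omega⟩) = 0 ∧
      m s(σ ⟨i, by omega⟩, σ ⟨i + 1, by omega⟩) = 0 ∧
      m s(σ ⟨j, by omega⟩, σ ⟨j + 1, by omega⟩) = 0 ∧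
      m s(σ ⟨n - 1, by omega⟩, σ ⟨0, by omega⟩) = 0 := by
  have : NeZero n := ⟨by omega⟩
  obtain ⟨σ0, h0⟩ := exists_good hn
  have : ∃ c0, ∃ hc : c0 + 1 < n, m s(σ0 ⟨c0, by omega⟩, σ0 ⟨c0 + 1, hc⟩) = 0 := by
    by_contra hcon
    push Not at hcon
    refine std_ineq hm h0 (p1 := 0) (p2 := n - 2) (p3 := n - 1) (p4 := n - 1)
      (by omega) (by omega) (by omega) (by omega) ?_ ?_
    · intro v hv h
      omega
    · intro c hc h
      exact hcon c hc
  obtain ⟨c0, hc0, hz⟩ := this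
  obtain ⟨σ, hσ, h1, h2⟩ := exists_rot hn h0 c0 hc0
  obtain ⟨v1, i, v2, j, v3, a1, a2, a3, a4, a5, b1, b2, b3, b4, b5⟩ := comb_core hn
    (fun v => ∀ hv : v < n, m s(σ ⟨v, hv⟩, σ ⟨v, hv⟩) ≠ 0)
    (fun c => ∀ hc : c + 1 < n, m s(σ ⟨c, by omega⟩, σ ⟨c + 1, hc⟩) ≠ 0) (by
      intro p1 p2 p3 p4 q1 q2 q3 q4 hd he
      exact std_ineq hm hσ q1 q2 q3 q4 (fun v hv h => hd v hv h hv) (fun c hc h => he c hc h hc))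
  push Not at b1 b2 b3 b4 b5
  refine ⟨σ, v1, i, v2, j, v3, a1, a2, a3, a4, a5, hσ, b1.2, b2.2, b3.2, b4.2, b5.2, ?_⟩
  rw [h1, h2]
  exact hz

end Labelling

/-! ### Leading monomials of the minors -/

section Leading

variable {n : ℕ} {rank : Sym2 (Fin n) → ℕ}

lemma tdeg_sum_single {κ : Type*} [Fintype κ] (x : κ → Sym2 (Fin n)) :
    tdeg (∑ k, Finsupp.single (x k) 1) = Fintype.card κ := by
  classical
  have : ∀ s : Finset κ, tdeg (∑ k ∈ s, Finsupp.single (x k) 1) = s.card := by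
    intro s
    induction s using Finset.induction_on with
    | empty => simp [tdeg]
    | insert a s ha ih =>
      rw [Finset.sum_insert ha, tdeg_add, ih, Finset.card_insert_of_notMem ha]
      simp [tdeg, add_comm]
  exact this _

lemma lt_of_fixed {κ : Type*} [Fintype κ] (x y : κ → Sym2 (Fin n)) (F : κ → Prop) (N : ℕ)
    (h1 : ∀ k, F k → x k = y k) (h2 : ∀ k, ¬ F k → rank (y k) < N)
    (h3 : ∃ k, ¬ F k ∧ N ≤ rank (x k)) :
    DegRevLexLT rank (∑ k, Finsupp.single (x k) 1) (∑ k, Finsupp.single (y k) 1) := by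
  classical
  have hle : ∀ v, N ≤ rank v → ∀ k, (Finsupp.single (y k) 1 : Sym2 (Fin n) →₀ ℕ) v ≤
      (Finsupp.single (x k) 1 : Sym2 (Fin n) →₀ ℕ) v := by
    intro v hv k
    by_cases hF : F k
    · rw [h1 k hF]
    · have := h2 k hF
      rw [Finsupp.single_eq_of_ne]
      · exact Nat.zero_le _
      · rintro rfl
        omega
  refine lt_of_threshold N (by rw [tdeg_sum_single, tdeg_sum_single]) ?_ ?_
  · intro v hv
    rw [Finsupp.finsetSum_apply, Finsupp.finsetSum_apply]
    exact Finset.sum_le_sum fun k _ => hle v hv k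
  · obtain ⟨k, hk, hk'⟩ := h3
    refine ⟨x k, hk', ?_⟩
    rw [Finsupp.finsetSum_apply, Finsupp.finsetSum_apply]
    refine Finset.sum_lt_sum (fun k' _ => hle _ hk' k') ⟨k, Finset.mem_univ _, ?_⟩
    rw [Finsupp.single_eq_of_ne, Finsupp.single_eq_same]
    · exact one_pos
    · intro e
      have := h2 k hk
      rw [e] at hk'
      omega

lemma rank_diag (hr : IsGoodRank n rank) (a : Fin n) : rank s(a, a) < n := by
  rw [hr.2.1]
  exact a.2

lemma rank_U (hr : IsGoodRank n rank) (hn : 4 ≤ n) {v : Sym2 (Fin n)} (hv : v ∈ Uset n) :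
    n ≤ rank v ∧ rank v < 2 * n := by
  obtain ⟨i, j, rfl, h⟩ := hv
  have := i.2
  have := j.2
  rcases h with h | ⟨h, h'⟩ | ⟨h, h'⟩
  · rw [hr.2.2.1 i j h]
    omega
  · rw [hr.2.2.2.1 i j h h']
    omega
  · rw [hr.2.2.2.2.1 i j h h']
    omega

lemma perm_mon_lt (hr : IsGoodRank n rank) (hn : 4 ≤ n) {σ : Equiv.Perm (Fin n)} (hσ : Good σ)
    {p1 p2 p3 p4 : ℕ} (h12 : p1 ≤ p2) (h23 : p2 < p3)
    (h34 : p3 ≤ p4) (h4 : p4 < n) (π : Equiv.Perm (Fin (n - 2))) (hπ : π ≠ 1) :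
    DegRevLexLT rank
      (∑ k, Finsupp.single s(σ (skip n p2 p3 (π k)), σ (skip n p1 p4 k)) 1)
      (xmon σ p1 p2 p3 p4) := by
  classical
  have cell1 : ∀ k : Fin (n - 2), skip n p2 p3 k = skip n p1 p4 k ∨
      cadj n (skip n p2 p3 k) (skip n p1 p4 k) := by
    intro k
    by_cases h : (skip n p2 p3 k : ℕ) = skip n p1 p4 k
    · exact Or.inl (Fin.ext h)
    · refine Or.inr ?_
      revert h
      have := k.2
      simp only [skip, cadj]
      split_ifs <;> omega
  have hrank1 : ∀ k : Fin (n - 2), rank s(σ (skip n p2 p3 k), σ (skip n p1 p4 k)) < 2 * n := by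
    intro k
    rcases cell1 k with h | h
    · rw [h]
      have := rank_diag hr (σ (skip n p1 p4 k))
      omega
    · by_cases h' : skip n p2 p3 k = skip n p1 p4 k
      · rw [h']
        have := rank_diag hr (σ (skip n p1 p4 k))
        omega
      · exact (rank_U hr hn ((hσ _ _ h').2 h)).2
  by_cases hB : ∀ k, skip n p2 p3 (π k) = skip n p1 p4 k ∨
      cadj n (skip n p2 p3 (π k)) (skip n p1 p4 k)
  swap
  · push Not at hB
    obtain ⟨k, hk, hk'⟩ := hB
    refine lt_of_fixed _ _ (fun _ => False) (2 * n) (fun _ h => h.elim) (fun k _ => hrank1 k)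
      ⟨k, id, ?_⟩
    refine hr.2.2.2.2.2 _ ?_
    rintro (⟨i, hi⟩ | h)
    · rw [Sym2.eq_iff] at hi
      have : σ (skip n p2 p3 (π k)) = σ (skip n p1 p4 k) := by
        rcases hi with ⟨h, h'⟩ | ⟨h, h'⟩ <;> rw [h, h']
      exact hk (σ.injective this)
    · exact hk' ((hσ _ _ hk).1 h)
  have hrinj := (skip_strictMono (n := n) h23).injective
  have hcinj := (skip_strictMono (n := n) (show p1 < p4 by omega)).injective
  -- indicator differences
  let z : (Fin (n - 2) → Fin n) → ℕ → Fin (n - 2) → ℤ := fun f t k =>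
    (if (f k : ℕ) ≤ t then 1 else 0) - (if (skip n p1 p4 k : ℕ) ≤ t then 1 else 0)
  have hz : ∀ t, ∑ k, z (fun k => skip n p2 p3 (π k)) t k = ∑ k, z (skip n p2 p3) t k := by
    intro t
    simp only [z, Finset.sum_sub_distrib]
    rw [Equiv.sum_comp π (fun k => if (skip n p2 p3 k : ℕ) ≤ t then (1 : ℤ) else 0)]
  -- natural number version of hB
  have hB' : ∀ k, (skip n p2 p3 (π k) : ℕ) = skip n p1 p4 k ∨
      cadj n (skip n p2 p3 (π k)) (skip n p1 p4 k) := fun k => (hB k).imp (congrArg Fin.val) id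
  have hab : (∃ k, (skip n p2 p3 (π k) : ℕ) = 0 ∧ (skip n p1 p4 k : ℕ) = n - 1) →
      ∃ k, (skip n p2 p3 (π k) : ℕ) = n - 1 ∧ (skip n p1 p4 k : ℕ) = 0 := by
    rintro ⟨kA, hA1, hA2⟩
    by_contra hcon
    push Not at hcon
    have hmiss : ∀ k : Fin (n - 2), (skip n p1 p4 k : ℕ) ≠ p4 := by
      intro k
      simp only [skip]
      split_ifs <;> omega
    have hp : p4 ≠ n - 1 := fun h => hmiss kA (hA2.trans h.symm)
    have hs := hz p4
    have h0 : ∑ k, z (skip n p2 p3) p4 k = 0 := by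
      refine Finset.sum_eq_zero fun k _ => ?_
      have : ((skip n p2 p3 k : ℕ) ≤ p4 ↔ (skip n p1 p4 k : ℕ) ≤ p4) := by
        simp only [skip]
        split_ifs <;> omega
      simp only [z, this, sub_self]
    rw [h0] at hs
    have h1 : 0 < ∑ k, z (fun k => skip n p2 p3 (π k)) p4 k := by
      refine Finset.sum_pos' (fun k _ => ?_) ⟨kA, Finset.mem_univ _, ?_⟩
      · have a1 := hB' k
        have a2 := hcon k
        have a3 := hmiss k
        have := (skip n p2 p3 (π k)).2
        have := (skip n p1 p4 k).2
        simp only [z, cadj] at *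
        split_ifs <;> omega
      · simp only [z, hA1, hA2]
        split_ifs <;> omega
    omega
  have hba : (∃ k, (skip n p2 p3 (π k) : ℕ) = n - 1 ∧ (skip n p1 p4 k : ℕ) = 0) →
      ∃ k, (skip n p2 p3 (π k) : ℕ) = 0 ∧ (skip n p1 p4 k : ℕ) = n - 1 := by
    rintro ⟨kA, hA1, hA2⟩
    by_contra hcon
    push Not at hcon
    have hmiss : ∀ k : Fin (n - 2), (skip n p2 p3 (π k) : ℕ) ≠ p2 := by
      intro k
      simp only [skip]
      split_ifs <;> omega
    have hs := hz p2
    have h0 : ∑ k, z (skip n p2 p3) p2 k = 0 := by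
      refine Finset.sum_eq_zero fun k _ => ?_
      have : ((skip n p2 p3 k : ℕ) ≤ p2 ↔ (skip n p1 p4 k : ℕ) ≤ p2) := by
        simp only [skip]
        split_ifs <;> omega
      simp only [z, this, sub_self]
    rw [h0] at hs
    have h1 : ∑ k, z (fun k => skip n p2 p3 (π k)) p2 k < 0 := by
      refine Finset.sum_neg' (fun k _ => ?_) ⟨kA, Finset.mem_univ _, ?_⟩
      · have a1 := hB' k
        have a2 := hcon k
        have a3 := hmiss k
        have := (skip n p2 p3 (π k)).2
        have := (skip n p1 p4 k).2
        simp only [z, cadj] at *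
        split_ifs <;> omega
      · simp only [z, hA1, hA2]
        split_ifs <;> omega
    omega
  -- a function with zero sum dominating the wrap contributions
  obtain ⟨w, hw0, hw1, hw2, hw3⟩ : ∃ w : Fin (n - 2) → ℤ, ∑ k, w k = 0 ∧
      (∀ k, (skip n p2 p3 (π k) : ℕ) = 0 ∧ (skip n p1 p4 k : ℕ) = n - 1 → w k = 1) ∧
      (∀ k, (skip n p2 p3 (π k) : ℕ) = n - 1 ∧ (skip n p1 p4 k : ℕ) = 0 → w k = -1) ∧
      (∀ k, ¬ ((skip n p2 p3 (π k) : ℕ) = 0 ∧ (skip n p1 p4 k : ℕ) = n - 1) →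
        ¬ ((skip n p2 p3 (π k) : ℕ) = n - 1 ∧ (skip n p1 p4 k : ℕ) = 0) → w k = 0) := by
    by_cases hA : ∃ k, (skip n p2 p3 (π k) : ℕ) = 0 ∧ (skip n p1 p4 k : ℕ) = n - 1
    · obtain ⟨kB, hB1, hB2⟩ := hab hA
      obtain ⟨kA, hA1, hA2⟩ := hA
      refine ⟨fun k => (if k = kA then 1 else 0) - (if k = kB then 1 else 0), by simp, ?_, ?_, ?_⟩
      · rintro k ⟨q1, q2⟩
        have : k = kA := hcinj (Fin.ext (q2.trans hA2.symm))
        have h2 : k ≠ kB := by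
          rintro rfl
          omega
        simp [this ▸ h2, this]
      · rintro k ⟨q1, q2⟩
        have : k = kB := hcinj (Fin.ext (q2.trans hB2.symm))
        have h2 : k ≠ kA := by
          rintro rfl
          omega
        simp [this ▸ h2, this]
      · intro k q1 q2
        have g1 : k ≠ kA := by
          rintro rfl
          exact q1 ⟨hA1, hA2⟩
        have g2 : k ≠ kB := by
          rintro rfl
          exact q2 ⟨hB1, hB2⟩
        simp [g1, g2]
    · refine ⟨fun _ => 0, by simp, fun k hk => (hA ⟨k, hk⟩).elim,
        fun k hk => (hA (hba ⟨k, hk⟩)).elim, fun _ _ _ => rfl⟩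
  -- off-diagonal cells are fixed
  have hfix : ∀ k, skip n p2 p3 k ≠ skip n p1 p4 k → π k = k := by
    intro k0 hk0
    have hk0' : (skip n p2 p3 k0 : ℕ) ≠ skip n p1 p4 k0 := fun h => hk0 (Fin.ext h)
    have hcase : (p1 ≤ (k0 : ℕ) ∧ (k0 : ℕ) < p2) ∨ (p3 ≤ (k0 : ℕ) + 1 ∧ (k0 : ℕ) + 1 < p4) := by
      revert hk0'
      simp only [skip]
      split_ifs <;> omega
    rcases hcase with ⟨q1, q2⟩ | ⟨q1, q2⟩
    · have e1 : (skip n p2 p3 k0 : ℕ) = k0 := by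
        simp only [skip]
        split_ifs
        omega
      have e2 : (skip n p1 p4 k0 : ℕ) = k0 + 1 := by
        simp only [skip]
        split_ifs <;> omega
      have hs := hz k0
      have h1 : ∑ k, z (skip n p2 p3) k0 k = ∑ k, if k = k0 then 1 else 0 := by
        refine Finset.sum_congr rfl fun k _ => ?_
        simp only [z, skip, Fin.ext_iff]
        split_ifs <;> omega
      rw [h1] at hs
      simp only [Finset.sum_ite_eq', Finset.mem_univ, if_true] at hs
      by_contra hne
      have hno : ∀ k, ¬ ((skip n p2 p3 (π k) : ℕ) = k0 ∧ (skip n p1 p4 k : ℕ) = k0 + 1) := by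
        rintro k ⟨g1, g2⟩
        have a1 : k = k0 := hcinj (Fin.ext (g2.trans e2.symm))
        have a2 : π k = k0 := hrinj (Fin.ext (g1.trans e1.symm))
        rw [a1] at a2
        exact hne a2
      have : ∑ k, z (fun k => skip n p2 p3 (π k)) k0 k ≤ ∑ k, w k := by
        refine Finset.sum_le_sum fun k _ => ?_
        have a1 := hB' k
        have a2 := hno k
        have a3 := hw1 k
        have a4 := hw2 k
        have a5 := hw3 k
        have := k0.2
        have := (skip n p2 p3 (π k)).2
        have := (skip n p1 p4 k).2
        simp only [z, cadj] at *
        split_ifs <;> omega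
      omega
    · have e1 : (skip n p2 p3 k0 : ℕ) = k0 + 2 := by
        simp only [skip]
        split_ifs <;> omega
      have e2 : (skip n p1 p4 k0 : ℕ) = k0 + 1 := by
        simp only [skip]
        split_ifs <;> omega
      have hs := hz (k0 + 1)
      have h1 : ∑ k, z (skip n p2 p3) (k0 + 1) k = ∑ k, if k = k0 then -1 else 0 := by
        refine Finset.sum_congr rfl fun k _ => ?_
        simp only [z, skip, Fin.ext_iff]
        split_ifs <;> omega
      rw [h1] at hs
      simp only [Finset.sum_ite_eq', Finset.mem_univ, if_true] at hs
      by_contra hne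
      have hno : ∀ k, ¬ ((skip n p2 p3 (π k) : ℕ) = k0 + 2 ∧ (skip n p1 p4 k : ℕ) = k0 + 1) := by
        rintro k ⟨g1, g2⟩
        have a1 : k = k0 := hcinj (Fin.ext (g2.trans e2.symm))
        have a2 : π k = k0 := hrinj (Fin.ext (g1.trans e1.symm))
        rw [a1] at a2
        exact hne a2
      have : ∑ k, w k ≤ ∑ k, z (fun k => skip n p2 p3 (π k)) (k0 + 1) k := by
        refine Finset.sum_le_sum fun k _ => ?_
        have a1 := hB' k
        have a2 := hno k
        have a3 := hw1 k
        have a4 := hw2 k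
        have a5 := hw3 k
        have := k0.2
        have := (skip n p2 p3 (π k)).2
        have := (skip n p1 p4 k).2
        simp only [z, cadj] at *
        split_ifs <;> omega
      omega
  refine lt_of_fixed _ _ (fun k => skip n p2 p3 k ≠ skip n p1 p4 k) n ?_ ?_ ?_
  · intro k hk
    rw [hfix k hk]
  · intro k hk
    rw [not_not] at hk
    rw [hk]
    exact rank_diag hr _
  · by_contra hcon
    push Not at hcon
    apply hπ
    ext1 k
    by_cases hk : skip n p2 p3 k = skip n p1 p4 k
    · have h1 := hcon k hk
      rcases hB k with h | h
      · exact hrinj (h.trans hk.symm)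
      · by_cases h' : skip n p2 p3 (π k) = skip n p1 p4 k
        · exact hrinj (h'.trans hk.symm)
        · have := (rank_U hr hn ((hσ _ _ h').2 h)).1
          omega
    · exact hfix k hk

lemma symMinor_eq_sum (K : Type*) [Field K] {s : ℕ} (a b : Fin s → Fin n) :
    symMinor K a b = ∑ π : Equiv.Perm (Fin s), MvPolynomial.monomial
      (∑ k, Finsupp.single s(a (π k), b k) 1) (((Equiv.Perm.sign π : ℤˣ) : ℤ) : K) := by
  rw [symMinor, Matrix.det_apply]
  refine Finset.sum_congr rfl fun π _ => ?_
  have : ∏ i, (Matrix.of fun k l =>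
      (MvPolynomial.X s(a k, b l) : MvPolynomial (Sym2 (Fin n)) K)) (π i) i =
      MvPolynomial.monomial (∑ k, Finsupp.single s(a (π k), b k) 1) 1 := by
    rw [MvPolynomial.monomial_sum_one]
    rfl
  rw [this, Units.smul_def]
  rcases Int.units_eq_one_or (Equiv.Perm.sign π) with h | h <;> simp [h]

lemma xmon_lead_aux (K : Type*) [Field K] (hr : IsGoodRank n rank) (hn : 4 ≤ n)
    {σ : Equiv.Perm (Fin n)} (hσ : Good σ)
    {p1 p2 p3 p4 : ℕ} (h12 : p1 ≤ p2) (h23 : p2 < p3)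
    (h34 : p3 ≤ p4) (h4 : p4 < n) : IsLeadingMonomial rank
      (symMinor K (fun k => σ (skip n p2 p3 k)) (fun k => σ (skip n p1 p4 k)))
      (xmon σ p1 p2 p3 p4) := by
  classical
  have hlt := perm_mon_lt hr hn hσ h12 h23 h34 h4
  rw [symMinor_eq_sum]
  constructor
  · rw [MvPolynomial.mem_support_iff, MvPolynomial.coeff_sum, Finset.sum_eq_single 1]
    · rw [MvPolynomial.coeff_monomial, if_pos]
      · simp
      · rfl
    · intro π _ hπ
      rw [MvPolynomial.coeff_monomial, if_neg]
      intro h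
      have := hlt π hπ
      rw [h] at this
      exact drl_irrefl _ this
    · simp
  · intro ν hν hne
    have := MvPolynomial.support_sum hν
    rw [Finset.mem_biUnion] at this
    obtain ⟨π, _, h⟩ := this
    have h := MvPolynomial.support_monomial_subset h
    rw [Finset.mem_singleton] at h
    rw [h]
    apply hlt
    rintro rfl
    exact hne h

lemma lead_neg {K : Type*} [Field K] {f : MvPolynomial (Sym2 (Fin n)) K}
    {μ : Sym2 (Fin n) →₀ ℕ} (ε : ℤˣ) (h : IsLeadingMonomial rank f μ) :
    IsLeadingMonomial rank (((ε : ℤ) : MvPolynomial (Sym2 (Fin n)) K) * f) μ := by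
  rcases Int.units_eq_one_or ε with rfl | rfl
  · simpa using h
  · simpa [IsLeadingMonomial, MvPolynomial.support_neg] using h

lemma exists_sort {s : ℕ} (f : Fin s → Fin n) (hf : Function.Injective f) :
    ∃ ρ : Equiv.Perm (Fin s), StrictMono (f ∘ ρ) :=
  ⟨Tuple.sort f, (Tuple.monotone_sort f).strictMono_of_injective
    (hf.comp (Equiv.injective _))⟩

lemma xset_lead (K : Type*) [Field K] (hr : IsGoodRank n rank) (hn : 4 ≤ n)
    {g : Sym2 (Fin n) →₀ ℕ} (hg : g ∈ xset n) :
    ∃ a b : Fin (n - 2) → Fin n, StrictMono a ∧ StrictMono b ∧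
      IsLeadingMonomial rank (symMinor K a b) g := by
  obtain ⟨σ, p1, p2, p3, p4, hσ, h12, h23, h34, h4, rfl⟩ := hg
  have h := xmon_lead_aux K hr hn hσ h12 h23 h34 h4
  have hrinj := (skip_strictMono (n := n) h23).injective
  have hcinj := (skip_strictMono (n := n) (show p1 < p4 by omega)).injective
  obtain ⟨ρ, hρ⟩ := exists_sort (fun k => σ (skip n p2 p3 k)) (σ.injective.comp hrinj)
  obtain ⟨τ, hτ⟩ := exists_sort (fun k => σ (skip n p1 p4 k)) (σ.injective.comp hcinj)
  refine ⟨_, _, hρ, hτ, ?_⟩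
  have e : symMinor K ((fun k => σ (skip n p2 p3 k)) ∘ ρ) ((fun k => σ (skip n p1 p4 k)) ∘ τ) =
      ((Equiv.Perm.sign ρ : ℤˣ) : ℤ) * (((Equiv.Perm.sign τ : ℤˣ) : ℤ) *
      symMinor K (fun k => σ (skip n p2 p3 k)) (fun k => σ (skip n p1 p4 k))) := by
    simp only [symMinor]
    rw [← Matrix.det_permute', ← Matrix.det_permute]
    rfl
  rw [e]
  exact lead_neg _ (lead_neg _ h)

end Leading

/-! ### A power series point of rank at most `n - 3` -/

/-- Combinatorial data: three rooted trees partitioning the vertices, plus three cross edges. -/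
structure TreeData (ι : Type) (n : ℕ) where
  adj : ι → ι → Prop
  blk : ι → Fin 3
  v : Fin 3 → ι
  cl : ι → ι
  δ : ι → ℕ
  adj_symm : ∀ x y, adj x y → adj y x
  adj_ne : ∀ x y, adj x y → x ≠ y
  blk_v : ∀ a, blk (v a) = a
  δ_lt : ∀ x, δ x ≤ n
  δ_v : ∀ a, δ (v a) = 0
  cl_adj : ∀ x, x ≠ v (blk x) → adj x (cl x)
  cl_blk : ∀ x, x ≠ v (blk x) → blk (cl x) = blk x
  cl_δ : ∀ x, x ≠ v (blk x) → δ x = δ (cl x) + 1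
  adj_δ : ∀ x y, adj x y → blk x = blk y → δ x = δ y + 1 ∨ δ y = δ x + 1
  adj_cl : ∀ x y, adj x y → blk x = blk y → δ y < δ x → y = cl x
  cross : ∀ a b, a ≠ b → ∃ x0 y0, blk x0 = a ∧ blk y0 = b ∧ adj x0 y0 ∧
    ∀ x y, blk x = a → blk y = b → adj x y → x = x0 ∧ y = y0

namespace TreeData

variable {ι : Type} [Fintype ι] [DecidableEq ι] {n : ℕ} (T : TreeData ι n)
variable {L : Type*} [Field L] (θ : ι → ι → L)

/-- the non-centers -/
abbrev A : Type := {x : ι // x ≠ T.v (T.blk x)}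

/-- auxiliary coefficients -/
noncomputable def lam : ℕ → ι → L
  | 0, _ => 1
  | m + 1, w => - (θ w (T.cl w) / θ w w) * lam m (T.cl w)

lemma exists_lam (h0 : ∀ x y, θ x y ≠ 0) : ∃ l : ι → L, (∀ x, l x ≠ 0) ∧ (∀ a, l (T.v a) = 1) ∧
    ∀ x, x ≠ T.v (T.blk x) → l x * θ x x = - (θ x (T.cl x) * l (T.cl x)) := by
  refine ⟨fun x => T.lam θ (T.δ x) x, ?_, ?_, ?_⟩
  · have : ∀ m x, T.lam θ m x ≠ 0 := by
      intro m
      induction m with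
      | zero => intro x; simp [lam]
      | succ m ih =>
        intro x
        simp only [lam]
        exact mul_ne_zero (neg_ne_zero.2 (div_ne_zero (h0 _ _) (h0 _ _))) (ih _)
    exact fun x => this _ x
  · intro a
    simp [T.δ_v, lam]
  · intro x hx
    simp only [T.cl_δ x hx, lam]
    have := h0 x x
    field_simp

variable (l : ι → L)

/-- off-diagonal entries -/
noncomputable def off (x y : ι) : PowerSeries L :=
  open scoped Classical in
  if T.adj x y then
    if T.blk x = T.blk y then PowerSeries.X * PowerSeries.C (θ x y)
    else - (PowerSeries.X ^ (4 * n + 1 - T.δ x - T.δ y) * PowerSeries.C (θ (T.v (T.blk x)) (T.v (T.blk y)) / (l x * l y)))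
  else PowerSeries.X ^ (4 * n + 1) * PowerSeries.C (θ x y)

/-- contributions to the diagonal -/
noncomputable def qq (x y : ι) : PowerSeries L :=
  open scoped Classical in
  if T.adj x y then
    if T.δ y < T.δ x then PowerSeries.C (θ x y * l y / l x) else PowerSeries.X ^ 2 * PowerSeries.C (θ x y * l y / l x)
  else PowerSeries.X ^ (4 * n + 1 + T.δ y - T.δ x) * PowerSeries.C (θ x y * l y / l x)

/-- the almost Laplacian matrix -/
noncomputable def M (x y : ι) : PowerSeries L :=
  if x = y then - ∑ z, (if T.blk z = T.blk x ∧ z ≠ x then T.qq θ l x z else 0)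
  else T.off θ l x y

/-- approximate kernel -/
noncomputable def uu (x : ι) : PowerSeries L := PowerSeries.X ^ T.δ x * PowerSeries.C (l x)


lemma off_symm (hs : ∀ x y, θ x y = θ y x) (x y : ι) : T.off θ l x y = T.off θ l y x := by
  have h1 : T.adj x y ↔ T.adj y x := ⟨T.adj_symm _ _, T.adj_symm _ _⟩
  simp only [off, eq_comm (a := T.blk x) (b := T.blk y), hs x y,
    hs (T.v (T.blk x)) (T.v (T.blk y)), mul_comm (l x) (l y), Nat.sub_right_comm _ (T.δ x) (T.δ y)]
  by_cases h : T.adj x y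
  · rw [if_pos h, if_pos (h1.1 h)]
  · rw [if_neg h, if_neg (fun h' => h (h1.2 h'))]

lemma M_symm (hs : ∀ x y, θ x y = θ y x) (x y : ι) : T.M θ l x y = T.M θ l y x := by
  by_cases h : x = y
  · rw [h]
  · simp only [M, if_neg h, if_neg (Ne.symm h), T.off_symm θ l hs x y]

lemma qq_mul (hl : ∀ x, l x ≠ 0) (x y : ι) (hb : T.blk y = T.blk x) :
    T.qq θ l x y * T.uu l x = T.off θ l x y * T.uu l y := by
  have hC : (PowerSeries.C (θ x y * l y / l x) : PowerSeries L) * PowerSeries.C (l x) = PowerSeries.C (θ x y) * PowerSeries.C (l y) := by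
    rw [← map_mul, ← map_mul, div_mul_cancel₀ _ (hl x)]
  have h1 := T.δ_lt x
  simp only [qq, off, uu, hb, if_true]
  split_ifs with ha hd
  · have : T.δ x = T.δ y + 1 := by
      rcases T.adj_δ x y ha hb.symm with h | h <;> omega
    rw [this, pow_succ]
    linear_combination (PowerSeries.X ^ T.δ y * PowerSeries.X) * hC
  · have : T.δ y = T.δ x + 1 := by
      rcases T.adj_δ x y ha hb.symm with h | h <;> omega
    rw [this, pow_succ]
    linear_combination (PowerSeries.X ^ 2 * PowerSeries.X ^ T.δ x) * hC
  · have : (PowerSeries.X : PowerSeries L) ^ (4 * n + 1 + T.δ y - T.δ x) * PowerSeries.X ^ T.δ x =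
        PowerSeries.X ^ (4 * n + 1) * PowerSeries.X ^ T.δ y := by
      rw [← pow_add, ← pow_add]
      congr 1
      omega
    linear_combination (PowerSeries.X ^ (4 * n + 1 + T.δ y - T.δ x) * PowerSeries.X ^ T.δ x) * hC +
      PowerSeries.C (θ x y) * PowerSeries.C (l y) * this

lemma X_dvd_off (x y : ι) : (PowerSeries.X : PowerSeries L) ∣ T.off θ l x y := by
  have h1 := T.δ_lt x
  have h2 := T.δ_lt y
  by_cases hn : n = 0
  · have e1 : T.δ x = 0 := by omega
    have e2 : T.δ y = 0 := by omega
    simp only [off]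
    split_ifs
    · exact Dvd.intro _ rfl
    · rw [dvd_neg]
      exact Dvd.dvd.mul_right (dvd_pow_self _ (by omega)) _
    · exact Dvd.dvd.mul_right (dvd_pow_self _ (by omega)) _
  · simp only [off]
    split_ifs
    · exact Dvd.intro _ rfl
    · rw [dvd_neg]
      exact Dvd.dvd.mul_right (dvd_pow_self _ (by omega)) _
    · exact Dvd.dvd.mul_right (dvd_pow_self _ (by omega)) _

lemma X_pow_dvd_off_cross (x y : ι) (hb : T.blk x ≠ T.blk y) :
    (PowerSeries.X : PowerSeries L) ^ (2 * n + 1) ∣ T.off θ l x y := by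
  have h1 := T.δ_lt x
  have h2 := T.δ_lt y
  simp only [off, if_neg hb]
  split_ifs
  · rw [dvd_neg]
    exact Dvd.dvd.mul_right (pow_dvd_pow _ (by omega)) _
  · exact Dvd.dvd.mul_right (pow_dvd_pow _ (by omega)) _

lemma M_diag (hl : ∀ x, l x ≠ 0) 
    (hcl : ∀ x, x ≠ T.v (T.blk x) → l x * θ x x = - (θ x (T.cl x) * l (T.cl x))) (x : ι) (hx : x ≠ T.v (T.blk x)) :
    (PowerSeries.X : PowerSeries L) ∣ T.M θ l x x - PowerSeries.C (θ x x) := by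
  classical
  simp only [M, if_true]
  have hne : T.cl x ≠ x := (T.adj_ne _ _ (T.cl_adj x hx)).symm
  rw [← Finset.add_sum_erase _ _ (Finset.mem_univ (T.cl x)),
    if_pos ⟨T.cl_blk x hx, hne⟩]
  have e1 : T.qq θ l x (T.cl x) = - PowerSeries.C (θ x x) := by
    have := T.cl_δ x hx
    rw [qq, if_pos (T.cl_adj x hx), if_pos (by omega), ← map_neg]
    congr 1
    rw [div_eq_iff (hl x), ← neg_eq_iff_eq_neg.2 (hcl x hx)]
    ring
  rw [e1]
  have : (PowerSeries.X : PowerSeries L) ∣ ∑ z ∈ Finset.univ.erase (T.cl x),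
      (if T.blk z = T.blk x ∧ z ≠ x then T.qq θ l x z else 0) := by
    refine Finset.dvd_sum fun z hz => ?_
    rw [Finset.mem_erase] at hz
    split_ifs with h
    · have h1 := T.δ_lt x
      simp only [qq]
      split_ifs with ha hd
      · exact (hz.1 (T.adj_cl x z ha h.1.symm hd)).elim
      · exact Dvd.dvd.mul_right (dvd_pow_self _ (by omega)) _
      · exact Dvd.dvd.mul_right (dvd_pow_self _ (by omega)) _
    · exact dvd_zero _
  have e2 : -(-PowerSeries.C (θ x x) + ∑ z ∈ Finset.univ.erase (T.cl x),
      (if T.blk z = T.blk x ∧ z ≠ x then T.qq θ l x z else 0)) - PowerSeries.C (θ x x) =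
      - ∑ z ∈ Finset.univ.erase (T.cl x),
      (if T.blk z = T.blk x ∧ z ≠ x then T.qq θ l x z else 0) := by ring
  rw [e2, dvd_neg]
  exact this

/-- the approximate kernel vectors are exact kernel vectors inside each block -/
lemma ker_blk (hl : ∀ x, l x ≠ 0) (a : Fin 3) (w : ι) (hw : T.blk w = a) :
    ∑ y, T.M θ l w y * (if T.blk y = a then T.uu l y else 0) = 0 := by
  classical
  subst hw
  rw [← Finset.add_sum_erase _ _ (Finset.mem_univ w), if_pos rfl]
  rw [show T.M θ l w w = - ∑ z, (if T.blk z = T.blk w ∧ z ≠ w then T.qq θ l w z else 0) by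
    simp [M]]
  rw [← Finset.add_sum_erase _ _ (Finset.mem_univ w), if_neg (by simp), zero_add, neg_mul,
    Finset.sum_mul, neg_add_eq_zero]
  refine Finset.sum_congr rfl fun z hz => ?_
  rw [Finset.mem_erase] at hz
  by_cases h : T.blk z = T.blk w
  · rw [if_pos ⟨h, hz.1⟩, if_pos h, T.qq_mul θ l hl w z h, M, if_neg (Ne.symm hz.1)]
  · rw [if_neg (fun h' => h h'.1), if_neg h, zero_mul, mul_zero]

lemma ker_cross (a : Fin 3) (w : ι) (hw : T.blk w ≠ a) :
    (PowerSeries.X : PowerSeries L) ^ (2 * n + 1) ∣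
      ∑ y, T.M θ l w y * (if T.blk y = a then T.uu l y else 0) := by
  refine Finset.dvd_sum fun y _ => ?_
  by_cases h : T.blk y = a
  · rw [M, if_neg (by rintro rfl; exact hw h)]
    exact Dvd.dvd.mul_right (T.X_pow_dvd_off_cross θ l w y (by rw [h]; exact hw)) _
  · rw [if_neg h, mul_zero]
    exact dvd_zero _

lemma split_sum {R : Type*} [AddCommMonoid R] (a : Fin 3) (F : ι → R)
    (hF : ∀ x, T.blk x ≠ a → F x = 0) :
    ∑ x, F x = ∑ w : T.A, F w + F (T.v a) := by
  classical
  rw [← Fintype.sum_subtype_add_sum_subtype (fun x => x ≠ T.v (T.blk x)) F]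
  congr 1
  have hva : ¬ (T.v a ≠ T.v (T.blk (T.v a))) := by
    rw [T.blk_v]
    simp
  rw [Finset.sum_eq_single (⟨T.v a, hva⟩ : {x // ¬ x ≠ T.v (T.blk x)})]
  · rintro ⟨x, hx⟩ _ hne
    apply hF
    intro h
    apply hne
    rw [not_not] at hx
    ext
    simp only
    rw [← h]
    exact hx
  · simp

lemma cross_sum (hl : ∀ x, l x ≠ 0) (hv : ∀ a, l (T.v a) = 1) (a b : Fin 3) (hab : a ≠ b) :
    open scoped Classical in
    (PowerSeries.X : PowerSeries L) ^ (4 * n + 1 + 1) ∣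
      (∑ y, (∑ x, T.M θ l y x * (if T.blk x = a then T.uu l x else 0)) *
        (if T.blk y = b then T.uu l y else 0)) - T.M θ l (T.v b) (T.v a)
      + (if T.adj (T.v b) (T.v a) then 0 else PowerSeries.X ^ (4 * n + 1) * PowerSeries.C (θ (T.v b) (T.v a))) := by
  classical
  obtain ⟨y0, x0, hy0, hx0, hadj, huniq⟩ := T.cross b a hab.symm
  set Z : PowerSeries L := (if T.adj (T.v b) (T.v a) then 0
    else PowerSeries.X ^ (4 * n + 1) * PowerSeries.C (θ (T.v b) (T.v a))) with hZ
  have key : ∀ y x, (PowerSeries.X : PowerSeries L) ^ (4 * n + 1 + 1) ∣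
      T.M θ l y x * (if T.blk x = a then T.uu l x else 0) *
        (if T.blk y = b then T.uu l y else 0)
      - (if y = T.v b then (if x = T.v a then T.M θ l (T.v b) (T.v a) else 0) else 0)
      + (if y = y0 then (if x = x0 then Z else 0) else 0) := by
    intro y x
    by_cases hx : T.blk x = a
    swap
    · have n1 : x ≠ T.v a := by
        rintro rfl
        exact hx (T.blk_v a)
      have n2 : x ≠ x0 := by
        rintro rfl
        exact hx hx0
      simp [hx, n1, n2]
    by_cases hy : T.blk y = b
    swap
    · have n1 : y ≠ T.v b := by
        rintro rfl
        exact hy (T.blk_v b)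
      have n2 : y ≠ y0 := by
        rintro rfl
        exact hy hy0
      simp [hy, n1, n2]
    rw [if_pos hx, if_pos hy]
    have hblk : T.blk y ≠ T.blk x := by rw [hx, hy]; exact hab.symm
    have hxy : y ≠ x := by
      rintro rfl
      exact hblk rfl
    have uva : T.uu l (T.v a) = 1 := by simp [uu, T.δ_v, hv]
    have uvb : T.uu l (T.v b) = 1 := by simp [uu, T.δ_v, hv]
    by_cases hc : y = T.v b ∧ x = T.v a
    · obtain ⟨rfl, rfl⟩ := hc
      rw [uva, uvb, if_pos rfl, if_pos rfl]
      by_cases h2 : T.v b = y0 ∧ T.v a = x0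
      · have : Z = 0 := by
          rw [hZ, if_pos]
          rw [h2.1, h2.2]
          exact hadj
        simp [this]
      · have : (if T.v b = y0 then (if T.v a = x0 then Z else 0) else 0) = 0 := by
          split_ifs with q1 q2
          · exact (h2 ⟨q1, q2⟩).elim
          · rfl
          · rfl
        rw [this]
        simp
    · have e1 : (if y = T.v b then (if x = T.v a then T.M θ l (T.v b) (T.v a) else 0) else 0) =
          (0 : PowerSeries L) := by
        split_ifs with q1 q2
        · exact (hc ⟨q1, q2⟩).elim
        · rfl
        · rfl
      rw [e1, sub_zero, M, if_neg hxy]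
      have d1 := T.δ_lt x
      have d2 := T.δ_lt y
      by_cases h2 : y = y0 ∧ x = x0
      · rw [if_pos h2.1, if_pos h2.2]
        have hn : ¬ T.adj (T.v b) (T.v a) := by
          intro h
          have := huniq _ _ (T.blk_v b) (T.blk_v a) h
          exact hc ⟨h2.1.trans this.1.symm, h2.2.trans this.2.symm⟩
        have hZ2 : T.off θ l y x * T.uu l x * T.uu l y + Z = 0 := by
          rw [hZ, if_neg hn, off, if_pos (by rw [h2.1, h2.2]; exact hadj), if_neg hblk, hx, hy,
            uu, uu]
          have : (PowerSeries.X : PowerSeries L) ^ (4 * n + 1 - T.δ y - T.δ x) * PowerSeries.X ^ T.δ x * PowerSeries.X ^ T.δ y =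
              PowerSeries.X ^ (4 * n + 1) := by
            rw [← pow_add, ← pow_add]
            congr 1
            omega
          have hC : (PowerSeries.C (θ (T.v b) (T.v a) / (l y * l x)) : PowerSeries L) * PowerSeries.C (l x) * PowerSeries.C (l y) =
              PowerSeries.C (θ (T.v b) (T.v a)) := by
            rw [← map_mul, ← map_mul]
            congr 1
            have := hl x
            have := hl y
            field_simp
          rw [← hC, ← this]
          ring
        rw [hZ2]
        exact dvd_zero _
      · have e2 : (if y = y0 then (if x = x0 then Z else 0) else 0) = 0 := by
          split_ifs with q1 q2
          · exact (h2 ⟨q1, q2⟩).elim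
          · rfl
          · rfl
        rw [e2, add_zero, off, if_neg (fun h => h2 (huniq _ _ hy hx h)), uu, uu]
        have hδ : 1 ≤ T.δ x + T.δ y := by
          by_contra hcon
          have z1 : x = T.v (T.blk x) := by
            by_contra h
            have := T.cl_δ x h
            omega
          have z2 : y = T.v (T.blk y) := by
            by_contra h
            have := T.cl_δ y h
            omega
          rw [hx] at z1
          rw [hy] at z2
          exact hc ⟨z2, z1⟩
        have : PowerSeries.X ^ (4 * n + 1) * PowerSeries.C (θ y x) * (PowerSeries.X ^ T.δ x * PowerSeries.C (l x)) * (PowerSeries.X ^ T.δ y * PowerSeries.C (l y)) =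
            PowerSeries.X ^ (4 * n + 1 + (T.δ x + T.δ y)) * (PowerSeries.C (θ y x) * PowerSeries.C (l x) * PowerSeries.C (l y)) := by
          rw [pow_add, pow_add]
          ring
        rw [this]
        exact Dvd.dvd.mul_right (pow_dvd_pow _ (by omega)) _
  have := Finset.dvd_sum (s := Finset.univ) fun y _ =>
    Finset.dvd_sum (s := Finset.univ) fun x _ => key y x
  simp only [Finset.sum_add_distrib, Finset.sum_sub_distrib] at this
  have s1 : ∀ (p q : ι) (F : PowerSeries L), ∑ y, ∑ x, (if y = p then (if x = q then F else 0)
      else 0) = F := by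
    intro p q F
    rw [Finset.sum_eq_single p]
    · simp
    · intro b _ hb
      simp [hb]
    · simp
  rw [s1, s1] at this
  simpa only [Finset.sum_mul] using this

end TreeData

/-! ### Determinants of products through a small space -/

lemma det_mul_eq_zero_of_card_lt {R : Type*} [CommRing R] [IsDomain R] {α : Type*} [Fintype α]
    {s : ℕ} (hs : Fintype.card α < s) (P : Matrix (Fin s) α R) (Q : Matrix α (Fin s) R) :
    (P * Q).det = 0 := by
  classical
  by_contra hdet
  have h1 : LinearIndependent R (P * Q) := Matrix.linearIndependent_rows_of_det_ne_zero hdet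
  have h2 : LinearIndependent R P := by
    refine LinearIndependent.of_comp (Matrix.vecMulLinear Q) ?_
    exact h1
  have := h2.fintype_card_le_finrank
  simp at this
  omega

namespace TreeData

variable {ι : Type} [Fintype ι] [DecidableEq ι] {n : ℕ} (T : TreeData ι n)
variable {L : Type*} [Field L] (θ : ι → ι → L)

lemma card_A : Fintype.card T.A + 3 ≤ Fintype.card ι := by
  have : Function.Injective (Sum.elim (fun w : T.A => w.1) T.v) := by
    rintro (⟨x, hx⟩ | a) (⟨y, hy⟩ | b) h
    · simp only [Sum.elim_inl] at h
      subst h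
      rfl
    · simp only [Sum.elim_inl, Sum.elim_inr] at h
      subst h
      exact (hx (by rw [T.blk_v])).elim
    · simp only [Sum.elim_inl, Sum.elim_inr] at h
      subst h
      exact (hy (by rw [T.blk_v])).elim
    · simp only [Sum.elim_inr] at h
      have := congrArg T.blk h
      rw [T.blk_v, T.blk_v] at this
      rw [this]
  have := Fintype.card_le_of_injective _ this
  simpa [Fintype.card_sum] using this

/-- weights -/
noncomputable def wt (x y : ι) : ℕ :=
  open scoped Classical in
  if x = y then 0 else if T.adj x y then 1 else 4 * n + 1

/-- leading coefficients -/
noncomputable def lc (x y : ι) : L :=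
  open scoped Classical in
  if (x = y ∧ x = T.v (T.blk x)) ∨ (T.adj x y ∧ T.blk x ≠ T.blk y) then 0 else θ x y

lemma dot_dvd {R : Type*} [CommRing R] {α : Type*} [Fintype α] (u w : α → R) (d e : R)
    (hu : ∀ a, d ∣ u a) (hw : ∀ a, e ∣ w a) : d * e ∣ u ⬝ᵥ w :=
  Finset.dvd_sum fun a _ => mul_dvd_mul (hu a) (hw a)

lemma mulVec_dvd {R : Type*} [CommRing R] {α : Type*} [Fintype α] (N : Matrix α α R) (w : α → R)
    (e : R) (hw : ∀ a, e ∣ w a) (a : α) : e ∣ (N.mulVec w) a :=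
  Finset.dvd_sum fun b _ => Dvd.dvd.mul_left (hw b) _

theorem exists_point (hn : 1 ≤ n) (hs : ∀ x y, θ x y = θ y x) (h0 : ∀ x y, θ x y ≠ 0) :
    ∃ Xm : Matrix ι ι (PowerSeries L), (∀ x y, Xm x y = Xm y x) ∧
      (∀ (s : ℕ), Fintype.card ι < s + 3 → ∀ f g : Fin s → ι, (Xm.submatrix f g).det = 0) ∧
      ∀ x y, (PowerSeries.X : PowerSeries L) ^ (T.wt x y + 1) ∣
        Xm x y - PowerSeries.X ^ (T.wt x y) * PowerSeries.C (T.lc θ x y) := by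
  classical
  obtain ⟨l, hl, hv, hcl⟩ := T.exists_lam θ h0
  set B : Matrix T.A T.A (PowerSeries L) := Matrix.of fun w z => T.M θ l w z with hB
  set H : Matrix T.A ι (PowerSeries L) := Matrix.of fun w x => T.M θ l w x with hH
  have hBu : IsUnit B.det := by
    rw [PowerSeries.isUnit_iff_constantCoeff, RingHom.map_det]
    have : (PowerSeries.constantCoeff (R := L)).mapMatrix B =
        Matrix.diagonal fun w : T.A => θ w w := by
      ext w z
      rw [RingHom.mapMatrix_apply, Matrix.map_apply, Matrix.diagonal_apply]
      split_ifs with h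
      · subst h
        have := T.M_diag θ l hl hcl w w.2
        rw [PowerSeries.X_dvd_iff, map_sub, PowerSeries.constantCoeff_C, sub_eq_zero] at this
        exact this
      · rw [← PowerSeries.X_dvd_iff]
        simp only [hB, Matrix.of_apply, M]
        rw [if_neg (fun h' => h (Subtype.ext h'))]
        exact T.X_dvd_off θ l _ _
    rw [this, Matrix.det_diagonal]
    exact (Finset.prod_ne_zero_iff.2 fun w _ => h0 _ _).isUnit
  have hBt : B.transpose = B := by
    ext w z
    simp only [Matrix.transpose_apply, hB, Matrix.of_apply]
    rw [T.M_symm θ l hs]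
  have hBit : (B⁻¹).transpose = B⁻¹ := by
    rw [Matrix.transpose_nonsing_inv, hBt]
  have hsymm : ∀ x y, (H.transpose * B⁻¹ * H) x y = (H.transpose * B⁻¹ * H) y x := by
    intro x y
    have : (H.transpose * B⁻¹ * H).transpose = H.transpose * B⁻¹ * H := by
      rw [Matrix.transpose_mul, Matrix.transpose_mul, Matrix.transpose_transpose, hBit,
        Matrix.mul_assoc]
    conv_rhs => rw [← this]
    rfl
  have hform : ∀ x y, (H.transpose * B⁻¹ * H) x y =
      (fun w => H w x) ⬝ᵥ (B⁻¹.mulVec fun w => H w y) := by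
    intro x y
    rw [Matrix.mul_assoc]
    rfl
  have hA : ∀ x y, x ≠ T.v (T.blk x) → (H.transpose * B⁻¹ * H) x y = T.M θ l x y := by
    intro x y hx
    have e1 : (H.transpose * B⁻¹ * H) x y = (B * B⁻¹ * H) ⟨x, hx⟩ y := by
      rw [Matrix.mul_assoc, Matrix.mul_assoc, Matrix.mul_apply, Matrix.mul_apply]
      refine Finset.sum_congr rfl fun w _ => ?_
      congr 1
      simp only [Matrix.transpose_apply, hH, hB, Matrix.of_apply]
      rw [T.M_symm θ l hs]
    rw [e1, Matrix.mul_nonsing_inv _ hBu, Matrix.one_mul]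
    rfl
  -- entries for a non-center
  have hAent : ∀ x y, x ≠ T.v (T.blk x) → (PowerSeries.X : PowerSeries L) ^ (T.wt x y + 1) ∣
        (H.transpose * B⁻¹ * H) x y -
          PowerSeries.X ^ (T.wt x y) * PowerSeries.C (T.lc θ x y) := by
    intro x y hx
    rw [hA x y hx]
    by_cases hxy : x = y
    · subst hxy
      have : ¬ ((x = x ∧ x = T.v (T.blk x)) ∨ (T.adj x x ∧ T.blk x ≠ T.blk x)) := by
        rintro (h | h)
        · exact hx h.2
        · exact h.2 rfl
      rw [wt, if_pos rfl, lc, if_neg this]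
      simpa using T.M_diag θ l hl hcl x hx
    · have h1 := T.δ_lt x
      have h2 := T.δ_lt y
      rw [M, if_neg hxy, off, wt, if_neg hxy, lc]
      by_cases ha : T.adj x y
      · by_cases hb : T.blk x = T.blk y
        · have : ¬ ((x = y ∧ x = T.v (T.blk x)) ∨ (T.adj x y ∧ T.blk x ≠ T.blk y)) := by
            rintro (h | h)
            · exact hxy h.1
            · exact h.2 hb
          rw [if_neg this, if_pos ha, if_pos ha, if_pos hb]
          simp
        · rw [if_pos (Or.inr ⟨ha, hb⟩), if_pos ha, if_pos ha, if_neg hb, map_zero, mul_zero,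
            sub_zero, dvd_neg]
          exact Dvd.dvd.mul_right (pow_dvd_pow _ (by omega)) _
      · have : ¬ ((x = y ∧ x = T.v (T.blk x)) ∨ (T.adj x y ∧ T.blk x ≠ T.blk y)) := by
          rintro (h | h)
          · exact hxy h.1
          · exact ha h.1
        rw [if_neg this, if_neg ha, if_neg ha, sub_self]
        exact dvd_zero _
  have hwt : ∀ x y, T.wt x y = T.wt y x := by
    intro x y
    have h1 : T.adj x y ↔ T.adj y x := ⟨T.adj_symm _ _, T.adj_symm _ _⟩
    simp only [wt, eq_comm (a := x) (b := y)]
    by_cases h : T.adj x y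
    · rw [if_pos h, if_pos (h1.1 h)]
    · rw [if_neg h, if_neg (fun h' => h (h1.2 h'))]
  have hlc : ∀ x y, T.lc θ x y = T.lc θ y x := by
    intro x y
    have h1 : T.adj x y ↔ T.adj y x := ⟨T.adj_symm _ _, T.adj_symm _ _⟩
    have h2 : ((x = y ∧ x = T.v (T.blk x)) ∨ (T.adj x y ∧ T.blk x ≠ T.blk y)) ↔
        ((y = x ∧ y = T.v (T.blk y)) ∨ (T.adj y x ∧ T.blk y ≠ T.blk x)) := by
      rw [h1, ne_comm]
      refine or_congr_left ?_
      constructor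
      · rintro ⟨rfl, h⟩
        exact ⟨rfl, h⟩
      · rintro ⟨rfl, h⟩
        exact ⟨rfl, h⟩
    simp only [lc, hs x y]
    by_cases h : ((x = y ∧ x = T.v (T.blk x)) ∨ (T.adj x y ∧ T.blk x ≠ T.blk y))
    · rw [if_pos h, if_pos (h2.1 h)]
    · rw [if_neg h, if_neg (fun h' => h (h2.2 h'))]
  -- the center-center entries
  have hcc : ∀ a, (PowerSeries.X : PowerSeries L) ∣ (H.transpose * B⁻¹ * H) (T.v a) (T.v a) := by
    intro a
    rw [hform]
    have hd : ∀ w : T.A, (PowerSeries.X : PowerSeries L) ∣ H w (T.v a) := by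
      intro w
      simp only [hH, Matrix.of_apply]
      rw [M, if_neg]
      · exact T.X_dvd_off θ l _ _
      · intro h
        apply w.2
        rw [h, T.blk_v]
    refine dvd_trans (Dvd.intro _ rfl) (dot_dvd _ _ PowerSeries.X 1 hd (fun _ => one_dvd _))
  set U : Fin 3 → T.A → PowerSeries L := fun a w => if T.blk w.1 = a then T.uu l w.1 else 0 with hU
  set h : Fin 3 → T.A → PowerSeries L := fun a w =>
    ∑ y, T.M θ l w y * (if T.blk y = a then T.uu l y else 0) with hh
  have uv : ∀ a, T.uu l (T.v a) = 1 := fun a => by simp [uu, T.δ_v, hv]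
  have hg : ∀ a, (fun w => H w (T.v a)) = h a - B.mulVec (U a) := by
    intro a
    ext1 w
    simp only [hh, Pi.sub_apply]
    rw [T.split_sum a (fun y => T.M θ l w y * (if T.blk y = a then T.uu l y else 0))
      (fun x hx => by rw [if_neg hx, mul_zero])]
    rw [T.blk_v, if_pos rfl, uv, mul_one]
    simp only [Matrix.mulVec, dotProduct, hB, hU, hH, Matrix.of_apply]
    ring
  have hhd : ∀ a w, (PowerSeries.X : PowerSeries L) ^ (2 * n + 1) ∣ h a w := by
    intro a w
    by_cases hw : T.blk w.1 = a
    · simp only [hh]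
      rw [T.ker_blk θ l hl a w hw]
      exact dvd_zero _
    · exact T.ker_cross θ l a w hw
  have hcross : ∀ a b, a ≠ b → (PowerSeries.X : PowerSeries L) ^ (4 * n + 1 + 1) ∣
      (H.transpose * B⁻¹ * H) (T.v a) (T.v b) -
        (if T.adj (T.v b) (T.v a) then 0
          else PowerSeries.X ^ (4 * n + 1) * PowerSeries.C (θ (T.v b) (T.v a))) := by
    intro a b hab
    have hX : (H.transpose * B⁻¹ * H) (T.v a) (T.v b) = h a ⬝ᵥ (B⁻¹.mulVec (h b))
        - h a ⬝ᵥ U b - U a ⬝ᵥ (fun w => H w (T.v b)) := by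
      have e1 : B⁻¹.mulVec (fun w => H w (T.v b)) = B⁻¹.mulVec (h b) - U b := by
        rw [hg b, Matrix.mulVec_sub, Matrix.mulVec_mulVec, Matrix.nonsing_inv_mul _ hBu,
          Matrix.one_mulVec]
      have e2 : (B.mulVec (U a)) ⬝ᵥ (B⁻¹.mulVec fun w => H w (T.v b)) =
          U a ⬝ᵥ (fun w => H w (T.v b)) := by
        rw [← Matrix.vecMul_transpose, hBt, ← Matrix.dotProduct_mulVec, Matrix.mulVec_mulVec,
          Matrix.mul_nonsing_inv _ hBu, Matrix.one_mulVec]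
      rw [hform, hg a, sub_dotProduct, e2, e1, dotProduct_sub]
    have hS : (∑ y, (∑ x, T.M θ l y x * (if T.blk x = a then T.uu l x else 0)) *
        (if T.blk y = b then T.uu l y else 0)) =
        h a ⬝ᵥ U b + (U a ⬝ᵥ (fun w => H w (T.v b)) + T.M θ l (T.v b) (T.v a)) := by
      rw [T.split_sum b (fun y => (∑ x, T.M θ l y x * (if T.blk x = a then T.uu l x else 0)) *
        (if T.blk y = b then T.uu l y else 0)) (fun x hx => by rw [if_neg hx, mul_zero])]
      congr 1
      rw [T.blk_v, if_pos rfl, uv, mul_one]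
      rw [T.split_sum a (fun x => T.M θ l (T.v b) x * (if T.blk x = a then T.uu l x else 0))
        (fun x hx => by rw [if_neg hx, mul_zero]), T.blk_v, if_pos rfl, uv, mul_one]
      congr 1
      refine Finset.sum_congr rfl fun w _ => ?_
      simp only [hU, hH, Matrix.of_apply]
      rw [T.M_symm θ l hs, mul_comm]
    have hc := T.cross_sum θ l hl hv a b hab
    rw [hS] at hc
    have hd : (PowerSeries.X : PowerSeries L) ^ (4 * n + 1 + 1) ∣
        h a ⬝ᵥ (B⁻¹.mulVec (h b)) := by
      have := dot_dvd (h a) (B⁻¹.mulVec (h b)) _ _ (hhd a) (mulVec_dvd _ _ _ (hhd b))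
      rw [← pow_add] at this
      refine dvd_trans (pow_dvd_pow _ (by omega)) this
    have := dvd_sub hd hc
    rw [hX]
    convert this using 1
    ring
  refine ⟨H.transpose * B⁻¹ * H, hsymm, ?_, ?_⟩
  · intro s hcard f g
    have e : (H.transpose * B⁻¹ * H).submatrix f g =
        ((H.transpose * B⁻¹).submatrix f id) * (H.submatrix id g) := by
      ext i j
      rfl
    rw [e]
    apply det_mul_eq_zero_of_card_lt
    have := T.card_A
    omega
  · intro x y
    by_cases hx : x = T.v (T.blk x)
    swap
    · exact hAent x y hx
    by_cases hy : y = T.v (T.blk y)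
    swap
    · rw [hsymm, hwt, hlc]
      exact hAent y x hy
    by_cases hab : T.blk x = T.blk y
    · have hxy : x = y := by rw [hx, hy, hab]
      subst hxy
      rw [lc, if_pos (Or.inl ⟨rfl, hx⟩), wt, if_pos rfl, map_zero, mul_zero, sub_zero, hx]
      simpa using hcc (T.blk x)
    · have := hcross _ _ hab
      rw [← hx, ← hy] at this
      have hxy : x ≠ y := by
        rintro rfl
        exact hab rfl
      by_cases ha : T.adj x y
      · rw [if_pos (T.adj_symm _ _ ha), sub_zero] at this
        rw [lc, if_pos (Or.inr ⟨ha, hab⟩), wt, if_neg hxy, if_pos ha, map_zero, mul_zero, sub_zero]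
        exact dvd_trans (pow_dvd_pow _ (by omega)) this
      · have h2 : ¬ ((x = y ∧ x = T.v (T.blk x)) ∨ (T.adj x y ∧ T.blk x ≠ T.blk y)) := by
          rintro (h | h)
          · exact hxy h.1
          · exact ha h.1
        rw [if_neg (fun h' => ha (T.adj_symm _ _ h')), hs y x] at this
        rw [lc, if_neg h2, wt, if_neg hxy, if_neg ha]
        exact this

end TreeData

/-! ### The tree data attached to a standard monomial -/

section CycleTree

variable {n : ℕ}

/-- block of a label -/
def cblk (i j x : ℕ) : Fin 3 := if x ≤ i then 0 else if x ≤ j then 1 else 2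

lemma cblk_zero {i j x : ℕ} : cblk i j x = 0 ↔ x ≤ i := by
  simp only [cblk]
  split_ifs <;> simp_all

lemma cblk_one {i j x : ℕ} : cblk i j x = 1 ↔ i < x ∧ x ≤ j := by
  simp only [cblk]
  split_ifs with h1 h2
  · simp; omega
  · simp; omega
  · simp; omega

lemma cblk_two {i j x : ℕ} (hij : i ≤ j) : cblk i j x = 2 ↔ j < x := by
  simp only [cblk]
  split_ifs with h1 h2
  · simp; omega
  · simp; omega
  · simp; omega

/-- center of the block of a label -/
def ccen (v1 i v2 j v3 x : ℕ) : ℕ := if x ≤ i then v1 else if x ≤ j then v2 else v3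

lemma cblk_eq_iff {i j x y : ℕ} (hij : i ≤ j) : cblk i j x = cblk i j y ↔
    (x ≤ i ∧ y ≤ i) ∨ (i < x ∧ x ≤ j ∧ i < y ∧ y ≤ j) ∨ (j < x ∧ j < y) := by
  simp only [cblk]
  split_ifs <;> simp <;> omega

lemma ccen_cases (v1 i v2 j v3 x : ℕ) : (x ≤ i ∧ ccen v1 i v2 j v3 x = v1) ∨
    (i < x ∧ x ≤ j ∧ ccen v1 i v2 j v3 x = v2) ∨ (i < x ∧ j < x ∧ ccen v1 i v2 j v3 x = v3) := by
  simp only [ccen]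
  split_ifs <;> omega

/-- next vertex on the way to the center -/
def cnext (v1 i v2 j v3 x : ℕ) : ℕ := if x < ccen v1 i v2 j v3 x then x + 1 else x - 1

lemma cnext_cases (v1 i v2 j v3 x : ℕ) :
    (x < ccen v1 i v2 j v3 x ∧ cnext v1 i v2 j v3 x = x + 1) ∨
    (ccen v1 i v2 j v3 x ≤ x ∧ cnext v1 i v2 j v3 x = x - 1) := by
  simp only [cnext]
  split_ifs <;> omega

lemma ne_ccen {v1 i v2 j v3 : ℕ} (p1 : v1 < n) (p2 : v2 < n) (p3 : v3 < n) (x : Fin n)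
    (hx : x ≠ (![⟨v1, p1⟩, ⟨v2, p2⟩, ⟨v3, p3⟩] : Fin 3 → Fin n) (cblk i j x)) :
    (x : ℕ) ≠ ccen v1 i v2 j v3 x := by
  intro h
  apply hx
  have h0 : (![⟨v1, p1⟩, ⟨v2, p2⟩, ⟨v3, p3⟩] : Fin 3 → Fin n) (cblk i j x) =
      ((if (x : ℕ) ≤ i then ⟨v1, p1⟩ else if (x : ℕ) ≤ j then ⟨v2, p2⟩ else ⟨v3, p3⟩) : Fin n) := by
    simp only [cblk]
    split_ifs <;> rfl
  rw [h0]
  ext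
  refine h.trans ?_
  simp only [ccen]
  split_ifs <;> rfl

/-- the tree data -/
def cycleTree (hn : 4 ≤ n) (v1 i v2 j v3 : ℕ) (h1 : v1 ≤ i) (h2 : i < v2) (h3 : v2 ≤ j)
    (h4 : j < v3) (h5 : v3 < n) : TreeData (Fin n) n where
  adj x y := cadj n x y
  blk x := cblk i j x
  v := ![⟨v1, by omega⟩, ⟨v2, by omega⟩, ⟨v3, by omega⟩]
  cl x := ⟨cnext v1 i v2 j v3 x, by
    have := x.2
    have := ccen_cases v1 i v2 j v3 x
    have := cnext_cases v1 i v2 j v3 x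
    omega⟩
  δ x := (x - ccen v1 i v2 j v3 x) + (ccen v1 i v2 j v3 x - x)
  adj_symm x y h := by
    simp only [cadj] at *
    omega
  adj_ne x y h := by
    rintro rfl
    simp only [cadj] at h
    omega
  blk_v a := by
    fin_cases a
    · simp [cblk_zero, h1]
    · simp [cblk_one, h2, h3]
    · simp [cblk_two (h2.le.trans h3), h4]
  δ_lt x := by
    have := x.2
    have := ccen_cases v1 i v2 j v3 x
    omega
  δ_v a := by
    fin_cases a
    · simp [ccen, h1]
    · simp [ccen, h3, not_le.2 h2]
    · have : ¬ v3 ≤ i := by omega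
      simp [ccen, this, not_le.2 h4]
  cl_adj x hx := by
    have hx' := ne_ccen _ _ _ x hx
    have := x.2
    have := cnext_cases v1 i v2 j v3 x
    simp only [cadj]
    omega
  cl_blk x hx := by
    have hx' := ne_ccen _ _ _ x hx
    have := x.2
    have := cnext_cases v1 i v2 j v3 x
    have := ccen_cases v1 i v2 j v3 x
    rw [cblk_eq_iff (by omega)]
    clear hx
    dsimp only
    omega
  cl_δ x hx := by
    have hx' := ne_ccen _ _ _ x hx
    have := x.2
    have := cnext_cases v1 i v2 j v3 x
    have := ccen_cases v1 i v2 j v3 x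
    have := ccen_cases v1 i v2 j v3 (cnext v1 i v2 j v3 x)
    clear hx
    dsimp only
    omega
  adj_δ x y h hb := by
    rw [cblk_eq_iff (by omega)] at hb
    have := x.2
    have := y.2
    have := ccen_cases v1 i v2 j v3 x
    have := ccen_cases v1 i v2 j v3 y
    simp only [cadj] at *
    omega
  adj_cl x y h hb hd := by
    rw [cblk_eq_iff (by omega)] at hb
    have := x.2
    have := y.2
    have := ccen_cases v1 i v2 j v3 x
    have := ccen_cases v1 i v2 j v3 y
    have := cnext_cases v1 i v2 j v3 x
    ext
    simp only [cadj] at *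
    omega
  cross a b hab := by
    have q2 : ∀ x, cblk i j x = 2 ↔ j < x := fun x => cblk_two (by omega)
    fin_cases a <;> fin_cases b <;> simp only [Fin.zero_eta, Fin.mk_one, Fin.reduceFinMk] at * <;>
      simp only [cblk_zero, cblk_one, q2] at *
    · exact (hab rfl).elim
    · refine ⟨⟨i, by omega⟩, ⟨i + 1, by omega⟩, ?_, ?_, ?_, ?_⟩
      · simp
      · simp; omega
      · simp [cadj]
      · intro x y hx hy h
        simp only [cadj, Fin.ext_iff] at *
        omega
    · refine ⟨⟨0, by omega⟩, ⟨n - 1, by omega⟩, ?_, ?_, ?_, ?_⟩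
      · simp
      · simp; omega
      · simp [cadj]; omega
      · intro x y hx hy h
        have := x.2
        have := y.2
        simp only [cadj, Fin.ext_iff] at *
        omega
    · refine ⟨⟨i + 1, by omega⟩, ⟨i, by omega⟩, ?_, ?_, ?_, ?_⟩
      · simp; omega
      · simp
      · simp [cadj]
      · intro x y hx hy h
        simp only [cadj, Fin.ext_iff] at *
        omega
    · exact (hab rfl).elim
    · refine ⟨⟨j, by omega⟩, ⟨j + 1, by omega⟩, ?_, ?_, ?_, ?_⟩
      · simp; omega
      · simp
      · simp [cadj]
      · intro x y hx hy h
        simp only [cadj, Fin.ext_iff] at *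
        omega
    · refine ⟨⟨n - 1, by omega⟩, ⟨0, by omega⟩, ?_, ?_, ?_, ?_⟩
      · simp; omega
      · simp
      · simp [cadj]; omega
      · intro x y hx hy h
        have := x.2
        have := y.2
        simp only [cadj, Fin.ext_iff] at *
        omega
    · refine ⟨⟨j + 1, by omega⟩, ⟨j, by omega⟩, ?_, ?_, ?_, ?_⟩
      · simp
      · simp; omega
      · simp [cadj]
      · intro x y hx hy h
        simp only [cadj, Fin.ext_iff] at *
        omega
    · exact (hab rfl).elim

end CycleTree

/-! ### Independence of standard monomials -/

section Indep

variable {n : ℕ}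

open Classical in
/-- weights of the variables -/
noncomputable def wS (n : ℕ) (v : Sym2 (Fin n)) : ℕ :=
  if v ∈ Dset n then 0 else if v ∈ Uset n then 1 else 4 * n + 1

lemma exists_psi (K : Type*) [Field K] (hn : 4 ≤ n) {m : Sym2 (Fin n) →₀ ℕ}
    (hm : ∀ g ∈ xset n, ¬ g ≤ m) :
    ∃ (Cs : Set (Sym2 (Fin n)))
      (Ψ : Sym2 (Fin n) → PowerSeries (FractionRing (MvPolynomial (Sym2 (Fin n)) K))),
      (∀ v ∈ Cs, m v = 0) ∧
      (∀ a b : Fin (n - 2) → Fin n, (Matrix.of fun k l => Ψ s(a k, b l)).det = 0) ∧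
      (∀ v ∈ Cs, PowerSeries.X ^ (wS n v + 1) ∣ Ψ v) ∧
      ∀ v ∉ Cs, PowerSeries.X ^ (wS n v + 1) ∣ Ψ v - PowerSeries.X ^ (wS n v) *
        PowerSeries.C (algebraMap (MvPolynomial (Sym2 (Fin n)) K)
          (FractionRing (MvPolynomial (Sym2 (Fin n)) K)) (MvPolynomial.X v)) := by
  classical
  obtain ⟨σ, v1, i, v2, j, v3, h1, h2, h3, h4, h5, hG, m1, m2, m3, e1, e2, e3⟩ :=
    std_structure hn hm
  set T := cycleTree hn v1 i v2 j v3 h1 h2 h3 h4 h5 with hT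
  let θ : Fin n → Fin n → FractionRing (MvPolynomial (Sym2 (Fin n)) K) := fun x y =>
    algebraMap (MvPolynomial (Sym2 (Fin n)) K) _ (MvPolynomial.X s(σ x, σ y))
  obtain ⟨Xm, hs, hd, hl⟩ := T.exists_point θ (by omega)
    (fun x y => by simp only [θ, Sym2.eq_swap])
    (fun x y => by
      simp only [θ]
      rw [Ne, FaithfulSMul.algebraMap_eq_zero_iff]
      exact MvPolynomial.X_ne_zero _)
  let cond : Fin n → Fin n → Prop := fun x y =>
    (x = y ∧ x = T.v (T.blk x)) ∨ (T.adj x y ∧ T.blk x ≠ T.blk y)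
  have hcs : ∀ x y, cond x y → cond y x := by
    rintro x y (⟨rfl, h⟩ | ⟨h, h'⟩)
    · exact Or.inl ⟨rfl, h⟩
    · exact Or.inr ⟨T.adj_symm _ _ h, h'.symm⟩
  have hwt : ∀ x y, wS n s(σ x, σ y) = T.wt x y := by
    intro x y
    unfold wS TreeData.wt
    have hD : s(σ x, σ y) ∈ Dset n ↔ x = y := by
      constructor
      · rintro ⟨k, hk⟩
        rw [Sym2.eq_iff] at hk
        rcases hk with ⟨p, q⟩ | ⟨p, q⟩ <;> exact σ.injective (p.trans q.symm)
      · rintro rfl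
        exact ⟨_, rfl⟩
    by_cases hxy : x = y
    · rw [if_pos (hD.2 hxy), if_pos hxy]
    · rw [if_neg (fun h => hxy (hD.1 h)), if_neg hxy]
      have := hG x y hxy
      have h' : T.adj x y ↔ cadj n x y := Iff.rfl
      simp only [this, h']
  have hmem : ∀ x y, s(σ x, σ y) ∈ {v | ∃ x y, v = s(σ x, σ y) ∧ cond x y} ↔ cond x y := by
    intro x y
    constructor
    · rintro ⟨x', y', h, hc⟩
      rw [Sym2.eq_iff] at h
      rcases h with ⟨p, q⟩ | ⟨p, q⟩
      · rw [σ.injective p, σ.injective q]; exact hc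
      · rw [σ.injective p, σ.injective q]; exact hcs _ _ hc
    · intro h
      exact ⟨x, y, rfl, h⟩
  refine ⟨{v | ∃ x y, v = s(σ x, σ y) ∧ cond x y},
    Sym2.lift ⟨fun a b => Xm (σ.symm a) (σ.symm b), fun a b => hs _ _⟩, ?_, ?_, ?_, ?_⟩
  · rintro v ⟨x, y, rfl, (⟨rfl, h⟩ | ⟨h, h'⟩)⟩
    · generalize T.blk x = a at h
      subst h
      fin_cases a
      · exact m1
      · exact m2
      · exact m3
    · have hx := x.2
      have hy := y.2
      change cadj n x y at h
      change ¬ (cblk i j x = cblk i j y) at h'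
      rw [cblk_eq_iff (by omega)] at h'
      have key : ∀ (p q : ℕ) (hp : p < n) (hq : q < n), m s(σ ⟨p, hp⟩, σ ⟨q, hq⟩) = 0 →
          (((x : ℕ) = p ∧ (y : ℕ) = q) ∨ ((x : ℕ) = q ∧ (y : ℕ) = p)) → m s(σ x, σ y) = 0 := by
        rintro p q hp hq h0 (⟨rfl, rfl⟩ | ⟨rfl, rfl⟩)
        · exact h0
        · rw [Sym2.eq_swap]; exact h0
      have hcase : ((((x : ℕ) = i ∧ (y : ℕ) = i + 1) ∨ ((x : ℕ) = i + 1 ∧ (y : ℕ) = i))) ∨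
          ((((x : ℕ) = j ∧ (y : ℕ) = j + 1) ∨ ((x : ℕ) = j + 1 ∧ (y : ℕ) = j))) ∨
          ((((x : ℕ) = n - 1 ∧ (y : ℕ) = 0) ∨ ((x : ℕ) = 0 ∧ (y : ℕ) = n - 1))) := by
        simp only [cadj] at h
        omega
      rcases hcase with hc | hc | hc
      · exact key _ _ _ _ e1 hc
      · exact key _ _ _ _ e2 hc
      · exact key _ _ _ _ e3 hc
  · intro a b
    have := hd (n - 2) (by rw [Fintype.card_fin]; omega) (fun k => σ.symm (a k))
      (fun l => σ.symm (b l))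
    exact this
  · intro v
    obtain ⟨a, b⟩ := v
    obtain ⟨x, rfl⟩ := σ.surjective a
    obtain ⟨y, rfl⟩ := σ.surjective b
    intro hv
    have hc := (hmem x y).1 hv
    have := hl x y
    rw [TreeData.lc, if_pos hc, map_zero, mul_zero, sub_zero, ← hwt] at this
    change _ ∣ Xm (σ.symm (σ x)) (σ.symm (σ y))
    rw [σ.symm_apply_apply, σ.symm_apply_apply]
    exact this
  · intro v
    obtain ⟨a, b⟩ := v
    obtain ⟨x, rfl⟩ := σ.surjective a
    obtain ⟨y, rfl⟩ := σ.surjective b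
    intro hv
    have hc : ¬ cond x y := fun h => hv ((hmem x y).2 h)
    have := hl x y
    rw [TreeData.lc, if_neg hc, ← hwt] at this
    change _ ∣ Xm (σ.symm (σ x)) (σ.symm (σ y)) - _
    rw [σ.symm_apply_apply, σ.symm_apply_apply]
    exact this

lemma indep (K : Type*) [Field K] (hn : 4 ≤ n) {f : MvPolynomial (Sym2 (Fin n)) K} (hf : f ≠ 0)
    (hstd : ∀ κ ∈ f.support, ∀ g ∈ xset n, ¬ g ≤ κ) : f ∉ minorsIdeal K n (n - 2) := by
  classical
  intro hfI
  obtain ⟨m, hm, hmin⟩ := Finset.exists_min_image f.support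
    (fun κ => ∑ v, κ v * wS n v) (MvPolynomial.support_nonempty.2 hf)
  obtain ⟨Cs, Ψ, hC, hdet, hΨ0, hΨ1⟩ := exists_psi K hn (hstd m hm)
  let c' : Sym2 (Fin n) → (MvPolynomial (Sym2 (Fin n)) K) := fun v => if v ∈ Cs then 0 else MvPolynomial.X v
  have hΩ : ∀ v, ∃ w : PowerSeries (FractionRing (MvPolynomial (Sym2 (Fin n)) K)), Ψ v = PowerSeries.X ^ (wS n v) * w ∧
      PowerSeries.constantCoeff w = algebraMap (MvPolynomial (Sym2 (Fin n)) K) _ (c' v) := by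
    intro v
    by_cases hv : v ∈ Cs
    · obtain ⟨q, hq⟩ := hΨ0 v hv
      refine ⟨PowerSeries.X * q, by rw [hq]; ring, ?_⟩
      simp [c', hv]
    · obtain ⟨q, hq⟩ := hΨ1 v hv
      refine ⟨PowerSeries.C (algebraMap (MvPolynomial (Sym2 (Fin n)) K) _ (MvPolynomial.X v)) + PowerSeries.X * q, ?_, ?_⟩
      · rw [sub_eq_iff_eq_add] at hq
        rw [hq]; ring
      · simp [c', hv]
  choose Ω hΩ1 hΩ2 using hΩ
  let ψ : K →+* FractionRing (MvPolynomial (Sym2 (Fin n)) K) := (algebraMap (MvPolynomial (Sym2 (Fin n)) K) (FractionRing (MvPolynomial (Sym2 (Fin n)) K))).comp MvPolynomial.C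
  let φ : K →+* PowerSeries (FractionRing (MvPolynomial (Sym2 (Fin n)) K)) := (PowerSeries.C).comp ψ
  have hker : minorsIdeal K n (n - 2) ≤ RingHom.ker (MvPolynomial.eval₂Hom φ Ψ) := by
    rw [minorsIdeal, Ideal.span_le]
    rintro p ⟨a, b, _, _, rfl⟩
    rw [SetLike.mem_coe, RingHom.mem_ker, symMinor, RingHom.map_det]
    rw [← hdet a b]
    congr 1
    ext1 k l
    simp
  have h0 : MvPolynomial.eval₂ φ Ψ f = 0 := hker hfI
  rw [MvPolynomial.eval₂_eq'] at h0
  set r := ∑ v, m v * wS n v with hr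
  have h1 : ∑ κ ∈ f.support, φ (MvPolynomial.coeff κ f) * ∏ v, Ψ v ^ κ v =
      PowerSeries.X ^ r * ∑ κ ∈ f.support, φ (MvPolynomial.coeff κ f) *
        (PowerSeries.X ^ ((∑ v, κ v * wS n v) - r) * ∏ v, Ω v ^ κ v) := by
    rw [Finset.mul_sum]
    refine Finset.sum_congr rfl fun κ hκ => ?_
    have : ∏ v, Ψ v ^ κ v = PowerSeries.X ^ (∑ v, κ v * wS n v) * ∏ v, Ω v ^ κ v := by
      rw [← Finset.prod_pow_eq_pow_sum, ← Finset.prod_mul_distrib]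
      refine Finset.prod_congr rfl fun v _ => ?_
      rw [hΩ1, mul_pow, ← pow_mul, mul_comm (wS n v)]
    have h2 : (PowerSeries.X : PowerSeries (FractionRing (MvPolynomial (Sym2 (Fin n)) K))) ^ (∑ v, κ v * wS n v) =
        PowerSeries.X ^ r * PowerSeries.X ^ ((∑ v, κ v * wS n v) - r) := by
      rw [← pow_add, Nat.add_sub_of_le (hmin κ hκ)]
    rw [this, h2]
    ring
  rw [h1, mul_eq_zero] at h0
  have h3 := h0.resolve_left (pow_ne_zero _ PowerSeries.X_ne_zero)
  have h4 := congrArg PowerSeries.constantCoeff h3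
  rw [map_sum, map_zero] at h4
  have h5 : algebraMap (MvPolynomial (Sym2 (Fin n)) K) (FractionRing (MvPolynomial (Sym2 (Fin n)) K)) (∑ κ ∈ f.support,
      MvPolynomial.C (MvPolynomial.coeff κ f) * (0 ^ ((∑ v, κ v * wS n v) - r) *
        ∏ v, c' v ^ κ v)) = 0 := by
    rw [← h4, map_sum]
    refine Finset.sum_congr rfl fun κ _ => ?_
    simp only [map_mul, map_pow, map_prod, map_zero, PowerSeries.constantCoeff_X, hΩ2, φ, ψ,
      RingHom.comp_apply, PowerSeries.constantCoeff_C]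
  rw [FaithfulSMul.algebraMap_eq_zero_iff] at h5
  have h6 := congrArg (MvPolynomial.coeff m) h5
  have hmono : ∀ κ : Sym2 (Fin n) →₀ ℕ, (∏ v, (MvPolynomial.X v : (MvPolynomial (Sym2 (Fin n)) K)) ^ κ v) =
      MvPolynomial.monomial κ 1 := by
    intro κ
    rw [MvPolynomial.monomial_eq, map_one, one_mul, Finsupp.prod_fintype]
    intro v
    exact pow_zero _
  have hprod : ∀ κ : Sym2 (Fin n) →₀ ℕ, κ ≠ m →
      MvPolynomial.coeff m (∏ v, c' v ^ κ v) = 0 := by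
    intro κ hκ
    by_cases h : ∃ v ∈ Cs, κ v ≠ 0
    · obtain ⟨v, hv, hv0⟩ := h
      rw [Finset.prod_eq_zero (Finset.mem_univ v), MvPolynomial.coeff_zero]
      simp [c', hv, hv0]
    · push Not at h
      have : ∏ v, c' v ^ κ v = ∏ v, (MvPolynomial.X v : (MvPolynomial (Sym2 (Fin n)) K)) ^ κ v := by
        refine Finset.prod_congr rfl fun v _ => ?_
        by_cases hv : v ∈ Cs
        · rw [h v hv, pow_zero, pow_zero]
        · simp [c', hv]
      rw [this, hmono, MvPolynomial.coeff_monomial, if_neg hκ]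
  have hprodm : ∏ v, c' v ^ m v = MvPolynomial.monomial m 1 := by
    rw [← hmono]
    refine Finset.prod_congr rfl fun v _ => ?_
    by_cases hv : v ∈ Cs
    · rw [hC v hv, pow_zero, pow_zero]
    · simp [c', hv]
  rw [MvPolynomial.coeff_sum, MvPolynomial.coeff_zero, Finset.sum_eq_single m] at h6
  · rw [hprodm, ← hr, Nat.sub_self, pow_zero, one_mul, MvPolynomial.coeff_C_mul,
      MvPolynomial.coeff_monomial, if_pos rfl, mul_one] at h6
    exact MvPolynomial.mem_support_iff.1 hm h6
  · intro κ _ hκ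
    rw [MvPolynomial.coeff_C_mul]
    rcases Nat.eq_zero_or_pos ((∑ v, κ v * wS n v) - r) with h | h
    · rw [h, pow_zero, one_mul, hprod κ hκ, mul_zero]
    · rw [zero_pow h.ne', zero_mul, MvPolynomial.coeff_zero, mul_zero]
  · intro h
    exact (h hm).elim

end Indep

/-- **Theorem 1.1(1).** For `n ≥ 4`, the `(n-2)`-minors of the generic symmetric
`n × n` matrix `X` form a Gröbner basis of `I_{n-2}` with respect to `≺`: the initial
ideal `in_≺(I_{n-2})` is generated by the leading monomials of the `(n-2)`-minors. -/
theorem stmt12 {K : Type*} [Field K] (n : ℕ) (hn : 4 ≤ n)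
    (rank : Sym2 (Fin n) → ℕ) (hrank : IsGoodRank n rank) :
    initialIdeal rank (minorsIdeal K n (n - 2)) =
      Ideal.span {p | ∃ a b : Fin (n - 2) → Fin n, StrictMono a ∧ StrictMono b ∧
        ∃ μ : Sym2 (Fin n) →₀ ℕ, IsLeadingMonomial rank (symMinor K a b) μ ∧
          p = MvPolynomial.monomial μ 1} := by
  have hG : ∀ g ∈ xset n, ∃ f ∈ minorsIdeal K n (n - 2), IsLeadingMonomial rank f g := by
    intro g hg
    obtain ⟨a, b, ha, hb, hl⟩ := xset_lead K hrank hn hg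
    exact ⟨_, Ideal.subset_span ⟨a, b, ha, hb, rfl⟩, hl⟩
  apply le_antisymm
  · rw [initialIdeal, Ideal.span_le]
    rintro p ⟨f, hf, hf0, μ, hμ, rfl⟩
    by_cases hstd : ∀ g ∈ xset n, ¬ g ≤ μ
    · obtain ⟨h, hh, hh0, hs⟩ := exists_std hrank.1 _ _ hG f hf μ hμ hstd
      exact (indep K hn hh0 hs hh).elim
    · push Not at hstd
      obtain ⟨g, hg, hle⟩ := hstd
      obtain ⟨a, b, ha, hb, hl⟩ := xset_lead K hrank hn hg
      have : (MvPolynomial.monomial μ (1 : K)) =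
          MvPolynomial.monomial (μ - g) 1 * MvPolynomial.monomial g 1 := by
        rw [MvPolynomial.monomial_mul, tsub_add_cancel_of_le hle, one_mul]
      rw [this]
      exact Ideal.mul_mem_left _ _ (Ideal.subset_span ⟨a, b, ha, hb, g, hl, rfl⟩)
  · rw [Ideal.span_le]
    rintro p ⟨a, b, ha, hb, μ, hμ, rfl⟩
    refine Ideal.subset_span ⟨_, Ideal.subset_span ⟨a, b, ha, hb, rfl⟩, ?_, μ, hμ, rfl⟩
    intro h0
    have := hμ.1
    rw [h0] at this
    simp at this
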